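/- Assume the Riemann Hypothesis and fix λ > 0. Then for all sufficiently large T, #{ordered pairs (γ,γ') of ordinates in (0,T], counted with multiplicity, with 0 < |γ − γ'| ≤ 2πλ/log T} ≪ (T log T) · D_d(λ,T)^{1/4} ≤ (T log T) · D(λ,T)^{1/4}, with an implied constant depending at most on λ. -/

import Mathlib

open Filter MeasureTheory
open scoped Real

noncomputable section

/-- The multiplicity (order of vanishing) of the Riemann zeta function at a point `z`:
the least `n` such that the `n`-th derivative of `ζ` at `z` is nonzero. -/
def zetaMult (z : ℂ) : ℕ := sInf {n : ℕ | iteratedDeriv n riemannZeta z ≠ 0}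

/-- Under RH, the set of ordinates `γ` with `0 < γ ≤ T` of nontrivial zeros `1/2 + iγ` of `ζ`. -/
def zetaOrds (T : ℝ) : Set ℝ :=
  {γ : ℝ | 0 < γ ∧ γ ≤ T ∧ riemannZeta (1 / 2 + γ * Complex.I) = 0}

/-- The multiplicity of the zero of `ζ` at `1/2 + iγ`. -/
def ordMult (γ : ℝ) : ℕ := zetaMult (1 / 2 + γ * Complex.I)

/-- `N(T)`: the number of ordinates of nontrivial zeros in `(0, T]`, counted with multiplicity. -/
def zetaN (T : ℝ) : ℕ := ∑ᶠ γ ∈ zetaOrds T, ordMult γ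

/-- The next ordinate of a nontrivial zero strictly above `γ`. -/
def nextOrd (γ : ℝ) : ℝ :=
  sInf {γ' : ℝ | γ < γ' ∧ riemannZeta (1 / 2 + γ' * Complex.I) = 0}

/-- The number of ordinates `0 < γ ≤ T`, counted with multiplicity, whose successor `γ⁺` in the
nondecreasing sequence of ordinates (with multiplicity) satisfies `γ⁺ - γ ≤ 2πλ / log T`.
A distinct ordinate of multiplicity `m` contributes `m - 1` spacings equal to `0`, together
with the gap `nextOrd γ - γ` to the next distinct ordinate. -/
def Dcount (lam T : ℝ) : ℕ :=
  ∑ᶠ γ ∈ zetaOrds T,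
    ((ordMult γ - 1) + if nextOrd γ - γ ≤ 2 * π * lam / Real.log T then 1 else 0)

/-- `D(λ, T)`: the proportion of ordinates `0 < γ ≤ T` (with multiplicity) with
`γ⁺ - γ ≤ 2πλ / log T`. -/
def Dprop (lam T : ℝ) : ℝ := (Dcount lam T : ℝ) / (zetaN T : ℝ)

/-- The number of distinct ordinates `0 < γ_d ≤ T` with `γ_d⁺ - γ_d ≤ 2πλ / log T`, where
`γ_d⁺` is the next distinct ordinate after `γ_d`. -/
def Ddcount (lam T : ℝ) : ℕ :=
  Nat.card {γ : ℝ | γ ∈ zetaOrds T ∧ nextOrd γ - γ ≤ 2 * π * lam / Real.log T}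

/-- `D_d(λ, T)`: the number of distinct ordinates `0 < γ_d ≤ T` with
`γ_d⁺ - γ_d ≤ 2πλ / log T`, divided by `N(T)`. -/
def Ddprop (lam T : ℝ) : ℝ := (Ddcount lam T : ℝ) / (zetaN T : ℝ)

/-- The number of ordered pairs `(γ, γ')` of ordinates in `(0, T]`, counted with multiplicity,
with `0 < |γ - γ'| ≤ δ`; i.e. the sum of `m(γ_d) * m(γ_d')` over pairs of distinct
ordinates `γ_d ≠ γ_d'` in `(0, T]` with `0 < |γ_d - γ_d'| ≤ δ`. -/
def pairCount (T δ : ℝ) : ℕ :=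
  ∑ᶠ p ∈ {p : ℝ × ℝ | p.1 ∈ zetaOrds T ∧ p.2 ∈ zetaOrds T ∧
      0 < |p.1 - p.2| ∧ |p.1 - p.2| ≤ δ}, ordMult p.1 * ordMult p.2



/-- entire function `(s-1) ζ(s)` -/
def zeta1 : ℂ → ℂ := Function.update (fun s ↦ (s - 1) * riemannZeta s) 1 1

lemma zeta1_of_ne {s : ℂ} (hs : s ≠ 1) : zeta1 s = (s - 1) * riemannZeta s := by
  simp [zeta1, hs]

lemma zeta1_one : zeta1 1 = 1 := by simp [zeta1]

lemma zeta1_diff : Differentiable ℂ zeta1 := by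
  rw [← differentiableOn_univ,
    ← Complex.differentiableOn_compl_singleton_and_continuousAt_iff (c := 1) Filter.univ_mem]
  refine ⟨DifferentiableOn.congr (f := fun s ↦ (s - 1) * riemannZeta s)
    (fun s hs ↦ DifferentiableAt.differentiableWithinAt ?_)
    fun _ hs ↦ Function.update_of_ne (Set.mem_sdiff_singleton.mp hs).2 .., ?_⟩
  · have : s ≠ 1 := (Set.mem_sdiff_singleton.mp hs).2
    exact (by fun_prop : DifferentiableAt ℂ (fun s : ℂ => s - 1) s).mul
      (differentiableAt_riemannZeta this)
  · refine continuousWithinAt_compl_self.mp ?_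
    rw [zeta1, continuousWithinAt_compl_self, continuousAt_update_same]
    exact riemannZeta_residue_one

lemma zeta1_eq_zero_iff (s : ℂ) : zeta1 s = 0 ↔ s ≠ 1 ∧ riemannZeta s = 0 := by
  by_cases h : s = 1
  · simp [h, zeta1_one]
  · simp [zeta1_of_ne h, h, sub_eq_zero]

/-- truncated fractional part -/
def fracT : ℝ → ℂ := fun t ↦ if 1 < t then ((Int.fract t : ℝ) : ℂ) else 0

lemma fracT_meas : Measurable fracT := by
  unfold fracT
  exact Measurable.ite measurableSet_Ioi (by fun_prop) measurable_const

lemma fracT_norm (t : ℝ) : ‖fracT t‖ ≤ 1 := by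
  unfold fracT
  split_ifs
  · rw [Complex.norm_real, Real.norm_of_nonneg (Int.fract_nonneg t)]
    exact (Int.fract_lt_one t).le
  · simp

lemma fracT_diff {s : ℂ} (hs : s.re < 0) : DifferentiableAt ℂ (mellin fracT) s := by
  apply mellin_differentiableAt_of_isBigO_rpow (a := 0) (b := s.re - 1) _ _ hs _ (by linarith)
  · refine LocallyIntegrable.locallyIntegrableOn ?_ _
    refine (locallyIntegrable_const (1:ℝ)).mono fracT_meas.aestronglyMeasurable ?_
    filter_upwards with x
    simpa using fracT_norm x
  · refine Asymptotics.IsBigO.of_bound 1 ?_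
    filter_upwards with x
    simpa using fracT_norm x
  · refine Asymptotics.IsBigO.of_bound 1 ?_
    have : Set.Iio (1:ℝ) ∈ nhdsWithin (0:ℝ) (Set.Ioi 0) :=
      mem_nhdsWithin_of_mem_nhds (Iio_mem_nhds one_pos)
    filter_upwards [this] with x hx
    have : ¬ (1 < x) := not_lt.mpr (le_of_lt hx)
    simp [fracT, this]

lemma mellin_fracT (s : ℂ) : mellin fracT (-s) =
    ∫ t in Set.Ioi (1:ℝ), ((Int.fract t : ℝ) : ℂ) * (t:ℂ) ^ (-(s+1)) := by
  unfold mellin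
  have h1 : ∀ t : ℝ, (t:ℂ) ^ (-s - 1) • fracT t =
      (Set.Ioi (1:ℝ)).indicator (fun t : ℝ => ((Int.fract t : ℝ) : ℂ) * (t:ℂ) ^ (-(s+1))) t := by
    intro t
    by_cases h : 1 < t
    · simp only [fracT, h, if_true, smul_eq_mul, Set.indicator, Set.mem_Ioi]
      rw [mul_comm]; congr 2; ring
    · simp [fracT, h]
  simp_rw [h1]
  rw [setIntegral_indicator measurableSet_Ioi]
  congr 2
  ext x; simp

lemma rpow_int (a : ℝ) (ha : 0 < a) : IntegrableOn (fun t : ℝ => t ^ (-(a+1))) (Set.Ioi 1) :=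
  integrableOn_Ioi_rpow_of_lt (by linarith) one_pos

lemma mellin_fracT_norm (s : ℂ) (hs : 0 < s.re) : ‖mellin fracT (-s)‖ ≤ 1 / s.re := by
  rw [mellin_fracT]
  calc _ ≤ ∫ t in Set.Ioi (1:ℝ), t ^ (-(s.re+1)) := by
        refine norm_integral_le_of_norm_le (rpow_int _ hs) ?_
        refine (ae_restrict_iff' measurableSet_Ioi).mpr (Eventually.of_forall fun t ht => ?_)
        have ht0 : (0:ℝ) < t := lt_trans one_pos ht
        rw [norm_mul, Complex.norm_real, Real.norm_of_nonneg (Int.fract_nonneg t),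
          Complex.norm_cpow_eq_rpow_re_of_pos ht0]
        have : (-(s+1)).re = -(s.re+1) := by simp
        rw [this]
        have := (Int.fract_lt_one t).le
        have h2 : 0 ≤ t ^ (-(s.re+1)) := by positivity
        nlinarith
    _ = 1 / s.re := by
        rw [integral_Ioi_rpow_of_lt (by linarith) one_pos]
        simp

lemma zeta_int {s : ℂ} (hs : 1 < s.re) :
    zeta1 s = s - s * (s - 1) * mellin fracT (-s) := by
  have hs1 : s ≠ 1 := by rintro rfl; simp at hs
  have h := LSeries_eq_mul_integral' (fun _ => 1) (r := 1) zero_le_one hs (by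
    simp; exact Asymptotics.isBigO_refl _ _)
  have hz : LSeries (fun _ => 1) s = riemannZeta s := LSeries_one_eq_riemannZeta hs
  rw [hz] at h
  have hI1 : IntegrableOn (fun t : ℝ => (t:ℂ) * (t:ℂ)^(-(s+1))) (Set.Ioi 1) := by
    have : IntegrableOn (fun t : ℝ => (t:ℂ)^(-s)) (Set.Ioi 1) :=
      integrableOn_Ioi_cpow_of_lt (by simpa using hs) one_pos
    refine this.congr_fun (fun t ht => ?_) measurableSet_Ioi
    have ht0 : (t:ℂ) ≠ 0 := by
      have : (0:ℝ) < t := lt_trans one_pos ht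
      exact_mod_cast this.ne'
    show (t:ℂ)^(-s) = (t:ℂ) * (t:ℂ)^(-(s+1))
    rw [show -s = 1 + (-(s+1)) by ring, Complex.cpow_add _ _ ht0, Complex.cpow_one]
  have hI2 : IntegrableOn (fun t : ℝ => ((Int.fract t:ℝ):ℂ) * (t:ℂ)^(-(s+1))) (Set.Ioi 1) := by
    refine Integrable.mono' (rpow_int s.re (by linarith)) ?_ ?_
    · refine (Measurable.mul (by fun_prop) ?_).aestronglyMeasurable
      fun_prop
    · refine (ae_restrict_iff' measurableSet_Ioi).mpr (Eventually.of_forall fun t ht => ?_)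
      have ht0 : (0:ℝ) < t := lt_trans one_pos ht
      rw [norm_mul, Complex.norm_real, Real.norm_of_nonneg (Int.fract_nonneg t),
          Complex.norm_cpow_eq_rpow_re_of_pos ht0]
      have : (-(s+1)).re = -(s.re+1) := by simp
      rw [this]
      have := (Int.fract_lt_one t).le
      have h2 : 0 ≤ t ^ (-(s.re+1)) := by positivity
      nlinarith
  have hI : ∫ t in Set.Ioi (1 : ℝ), (∑ k ∈ Finset.Icc 1 ⌊t⌋₊, (1:ℂ)) * t ^ (-(s + 1)) =
      (∫ t in Set.Ioi (1:ℝ), (t:ℂ) * (t:ℂ)^(-(s+1))) - mellin fracT (-s) := by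
    rw [mellin_fracT, ← integral_sub hI1 hI2]
    refine setIntegral_congr_fun measurableSet_Ioi (fun t ht => ?_)
    have ht0 : (0:ℝ) ≤ t := (lt_trans one_pos ht).le
    simp only [Finset.sum_const, Nat.card_Icc, Nat.add_sub_cancel, nsmul_eq_mul, mul_one]
    rw [← sub_mul]; congr 1
    have h3 : ((⌊t⌋₊:ℝ)) = t - Int.fract t := by
      rw [natCast_floor_eq_intCast_floor ht0, Int.fract]; ring
    exact_mod_cast congrArg (Complex.ofReal) h3
  have hI3 : (∫ t in Set.Ioi (1:ℝ), (t:ℂ) * (t:ℂ)^(-(s+1))) = 1 / (s - 1) := by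
    have : (∫ t in Set.Ioi (1:ℝ), (t:ℂ) * (t:ℂ)^(-(s+1))) = ∫ t in Set.Ioi (1:ℝ), (t:ℂ)^(-s) := by
      refine setIntegral_congr_fun measurableSet_Ioi (fun t ht => ?_)
      have ht0 : (t:ℂ) ≠ 0 := by
        have : (0:ℝ) < t := lt_trans one_pos ht
        exact_mod_cast this.ne'
      show (t:ℂ) * (t:ℂ)^(-(s+1)) = (t:ℂ)^(-s)
      rw [show -s = 1 + (-(s+1)) by ring, Complex.cpow_add _ _ ht0, Complex.cpow_one]
      try ring_nf
    rw [this, integral_Ioi_cpow_of_lt (by simpa using hs) one_pos]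
    simp
    rw [← neg_sub, inv_neg, show -s + 1 = 1 - s by ring]
    ring
  rw [hI, hI3] at h
  rw [zeta1_of_ne hs1, h]
  have : s - 1 ≠ 0 := sub_ne_zero.mpr hs1
  field_simp

lemma zeta1_formula {s : ℂ} (hs : 0 < s.re) :
    zeta1 s = s - s * (s - 1) * mellin fracT (-s) := by
  have hU : IsOpen {z : ℂ | 0 < z.re} := isOpen_lt continuous_const Complex.continuous_re
  have h1 : AnalyticOnNhd ℂ zeta1 {z : ℂ | 0 < z.re} :=
    (zeta1_diff.differentiableOn).analyticOnNhd hU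
  have h2 : AnalyticOnNhd ℂ (fun s => s - s * (s - 1) * mellin fracT (-s)) {z : ℂ | 0 < z.re} := by
    refine DifferentiableOn.analyticOnNhd (fun z hz => ?_) hU
    have : DifferentiableAt ℂ (fun s => mellin fracT (-s)) z :=
      DifferentiableAt.comp (f := fun s : ℂ => -s) z (fracT_diff (by simpa using hz)) (by fun_prop)
    exact DifferentiableAt.differentiableWithinAt (by fun_prop)
  refine h1.eqOn_of_preconnected_of_eventuallyEq h2
    (convex_halfSpace_re_gt 0).isPreconnected (z₀ := 2) (by simp) ?_ hs
  have : {z : ℂ | 1 < z.re} ∈ nhds (2:ℂ) :=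
    (isOpen_lt continuous_const Complex.continuous_re).mem_nhds (by simp)
  filter_upwards [this] with z hz using zeta_int hz

lemma zeta1_growth {s : ℂ} (hs : (1/10:ℝ) ≤ s.re) : ‖zeta1 s‖ ≤ 11 * (‖s‖ + 1)^2 := by
  rw [zeta1_formula (by linarith)]
  have h := mellin_fracT_norm s (by linarith)
  have h1 : 1 / s.re ≤ 10 := by
    rw [div_le_iff₀ (by linarith)]; linarith
  have h2 : ‖s - 1‖ ≤ ‖s‖ + 1 := by simpa using norm_sub_le s 1
  calc _ ≤ ‖s‖ + ‖s * (s-1) * mellin fracT (-s)‖ := norm_sub_le _ _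
    _ = ‖s‖ + ‖s‖ * ‖s-1‖ * ‖mellin fracT (-s)‖ := by rw [norm_mul, norm_mul]
    _ ≤ ‖s‖ + ‖s‖ * (‖s‖+1) * 10 := by
        gcongr; linarith
    _ ≤ _ := by nlinarith [norm_nonneg s]

lemma zeta1_lower (t : ℝ) : 1/2 ≤ ‖zeta1 (3 + t * Complex.I)‖ := by
  set s : ℂ := 3 + t * Complex.I with hs
  have hre : s.re = 3 := by simp [hs]
  have hs1 : s ≠ 1 := by intro h; rw [h] at hre; norm_num at hre
  have h0 : riemannZeta s = ∑' n : ℕ, 1 / (n + 1 : ℂ) ^ s :=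
    zeta_eq_tsum_one_div_nat_add_one_cpow (by rw [hre]; norm_num)
  have hn : ∀ n : ℕ, ‖1 / ((n:ℂ) + 1) ^ s‖ = 1 / ((n:ℝ)+1)^3 := by
    intro n
    rw [norm_div, norm_one]
    have : ((n:ℂ)+1) = (((n:ℝ)+1 : ℝ) : ℂ) := by push_cast; rfl
    rw [this, Complex.norm_cpow_eq_rpow_re_of_pos (by positivity), hre]
    norm_cast
  have hsum2 : HasSum (fun n : ℕ => 1 / ((n:ℝ)+1)^2) (π^2/6) := by
    have := (hasSum_nat_add_iff' 1).mpr hasSum_zeta_two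
    simpa using this
  have hle : ∀ n : ℕ, 1 / ((n:ℝ)+1)^3 ≤ 1 / ((n:ℝ)+1)^2 := by
    intro n
    apply one_div_le_one_div_of_le (by positivity)
    exact pow_le_pow_right₀ (by linarith [(Nat.cast_nonneg n : (0:ℝ) ≤ n)]) (by norm_num)
  have hsum3 : Summable (fun n : ℕ => 1 / ((n:ℝ)+1)^3) :=
    Summable.of_nonneg_of_le (fun n => by positivity) hle hsum2.summable
  have hsumC : Summable (fun n : ℕ => 1 / ((n:ℂ)+1)^s) := by
    apply Summable.of_norm
    simpa only [hn] using hsum3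
  have h1 : riemannZeta s - 1 = ∑' n : ℕ, 1 / (((n+1:ℕ):ℂ) + 1 : ℂ) ^ s := by
    rw [h0, hsumC.tsum_eq_zero_add]; simp
  have h2 : ‖riemannZeta s - 1‖ ≤ π^2/6 - 1 := by
    rw [h1]
    have hb : HasSum (fun n : ℕ => 1 / (((n+1:ℕ):ℝ)+1)^2) (π^2/6 - 1) := by
      have := (hasSum_nat_add_iff' 1).mpr hsum2
      simpa using this
    refine tsum_of_norm_bounded hb (fun n => ?_)
    rw [hn]; exact hle _
  have hpi : π^2/6 - 1 ≤ 3/4 := by nlinarith [Real.pi_lt_d2, Real.pi_pos]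
  have h3 : 1/4 ≤ ‖riemannZeta s‖ := by
    have := norm_sub_norm_le (1:ℂ) (riemannZeta s)
    rw [norm_sub_rev, norm_one] at this
    linarith
  rw [zeta1_of_ne hs1, norm_mul]
  have h4 : 2 ≤ ‖s - 1‖ := by
    have := Complex.abs_re_le_norm (s - 1)
    rw [Complex.sub_re, hre] at this
    norm_num at this; exact this
  nlinarith [norm_nonneg (riemannZeta s)]



lemma fac_one {f : ℂ → ℂ} (hf : Differentiable ℂ f) (ρ : ℂ) (ho : analyticOrderAt f ρ ≠ ⊤) :
    ∃ g : ℂ → ℂ, Differentiable ℂ g ∧ g ρ ≠ 0 ∧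
      ∀ z, f z = (z - ρ) ^ (analyticOrderNatAt f ρ) * g z := by
  have hfa : AnalyticAt ℂ f ρ := hf.analyticAt ρ
  obtain ⟨g, hg, hg0, he⟩ := (hfa.analyticOrderAt_ne_top).mp ho
  set n := analyticOrderNatAt f ρ
  classical
  refine ⟨Function.update (fun z => f z / (z - ρ) ^ n) ρ (g ρ), ?_, by simpa using hg0, ?_⟩
  · intro z
    by_cases hz : z = ρ
    · subst hz
      refine hg.differentiableAt.congr_of_eventuallyEq ?_
      filter_upwards [he] with w hw
      by_cases hwz : w = z
      · simp [hwz]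
      · have : w - z ≠ 0 := sub_ne_zero.mpr hwz
        simp only [Function.update, hwz, dite_false]
        rw [hw, smul_eq_mul]; field_simp
    · have h1 : DifferentiableAt ℂ (fun z => f z / (z - ρ) ^ n) z := by
        refine (hf z).div (by fun_prop) (pow_ne_zero _ (sub_ne_zero.mpr hz))
      refine h1.congr_of_eventuallyEq ?_
      have : {ρ}ᶜ ∈ nhds z := isOpen_compl_singleton.mem_nhds hz
      filter_upwards [this] with w hw
      have hw' : w ≠ ρ := hw
      simp [Function.update, hw']
  · intro z
    by_cases hz : z = ρ
    · subst hz
      have := he.self_of_nhds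
      simpa using this
    · have : z - ρ ≠ 0 := sub_ne_zero.mpr hz
      simp only [Function.update, hz, dite_false]
      field_simp

lemma fac_fin (Z : Finset ℂ) : ∀ {f : ℂ → ℂ} (_ : Differentiable ℂ f)
    (_ : ∀ ρ ∈ Z, analyticOrderAt f ρ ≠ ⊤),
    ∃ g : ℂ → ℂ, Differentiable ℂ g ∧ (∀ ρ ∈ Z, g ρ ≠ 0) ∧
      ∀ z, f z = (∏ ρ ∈ Z, (z - ρ) ^ (analyticOrderNatAt f ρ)) * g z := by
  classical
  induction Z using Finset.induction_on with
  | empty => intro f hf _; exact ⟨f, hf, by simp, by simp⟩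
  | insert a Z ha ih =>
    intro f hf ho
    obtain ⟨g, hg, hg0, hfg⟩ := fac_one hf a (ho a (by simp))
    have hord : ∀ ρ ∈ Z, analyticOrderAt f ρ = analyticOrderAt g ρ := by
      intro ρ hρ
      have hne : ρ ≠ a := fun h => ha (h ▸ hρ)
      have h1 : f = (fun z => (z - a) ^ (analyticOrderNatAt f a)) * g := by
        funext z; exact hfg z
      have hA : AnalyticAt ℂ (fun z => (z - a) ^ (analyticOrderNatAt f a)) ρ := by fun_prop
      have hz : analyticOrderAt (fun z => (z - a) ^ (analyticOrderNatAt f a)) ρ = 0 :=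
        hA.analyticOrderAt_eq_zero.mpr (pow_ne_zero _ (sub_ne_zero.mpr hne))
      conv_lhs => rw [h1]
      rw [analyticOrderAt_mul hA (hg.analyticAt ρ), hz, zero_add]
    obtain ⟨h, hh, hh0, hgh⟩ := ih hg (fun ρ hρ => by
      rw [← hord ρ hρ]; exact ho ρ (by simp [hρ]))
    refine ⟨h, hh, ?_, ?_⟩
    · intro ρ hρ
      rcases Finset.mem_insert.mp hρ with rfl | hρ
      · intro h0; apply hg0; rw [hgh, h0, mul_zero]
      · exact hh0 ρ hρ
    · intro z
      rw [Finset.prod_insert ha, hfg, hgh, mul_assoc]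
      congr 2
      refine Finset.prod_congr rfl fun ρ hρ => ?_
      simp only [analyticOrderNatAt, hord ρ hρ]

/-- Blaschke-type factor -/
def blf (z0 ρ z : ℂ) : ℂ := ((29/10:ℝ)^2 - (starRingEnd ℂ) (ρ - z0) * (z - z0)) / (29/10:ℝ)

lemma blf_diff (z0 ρ : ℂ) : Differentiable ℂ (blf z0 ρ) := by
  unfold blf; fun_prop

lemma blf_sphere {z0 ρ z : ℂ} (hz : ‖z - z0‖ = 29/10) : ‖blf z0 ρ z‖ = ‖z - ρ‖ := by
  unfold blf
  have h : ((29/10:ℝ)^2 : ℂ) = (starRingEnd ℂ) (z - z0) * (z - z0) := by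
    rw [mul_comm, Complex.mul_conj, Complex.normSq_eq_norm_sq, hz]; push_cast; ring
  rw [h, ← sub_mul, norm_div, norm_mul, ← map_sub, Complex.norm_conj, hz]
  rw [show z - z0 - (ρ - z0) = z - ρ by ring, Complex.norm_real]
  norm_num

lemma blf_ne {z0 ρ z : ℂ} (hz : ‖z - z0‖ ≤ 28/10) (hρ : ‖ρ - z0‖ ≤ 28/10) : blf z0 ρ z ≠ 0 := by
  unfold blf
  apply div_ne_zero _ (by norm_num)
  intro h
  have h1 : ((29/10:ℝ)^2 : ℂ) = (starRingEnd ℂ) (ρ - z0) * (z - z0) := sub_eq_zero.mp h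
  have h2 := congrArg norm h1
  rw [norm_mul, Complex.norm_conj, norm_pow, Complex.norm_real] at h2
  have : ‖ρ - z0‖ * ‖z - z0‖ ≤ 28/10 * (28/10) := by gcongr
  norm_num at h2 this
  linarith

lemma blf_logDeriv {z0 ρ z : ℂ} (hz : ‖z - z0‖ ≤ 27/10) (hρ : ‖ρ - z0‖ ≤ 28/10) :
    ‖logDeriv (blf z0 ρ) z‖ ≤ 4 := by
  have hd : HasDerivAt (blf z0 ρ) (-(starRingEnd ℂ) (ρ - z0) / (29/10:ℝ)) z := by
    unfold blf
    have h1 : HasDerivAt (fun z => (starRingEnd ℂ) (ρ - z0) * (z - z0)) ((starRingEnd ℂ) (ρ - z0)) z := by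
      simpa using ((hasDerivAt_id z).sub_const z0).const_mul ((starRingEnd ℂ) (ρ - z0))
    exact (h1.const_sub _).div_const _
  rw [logDeriv_apply, hd.deriv]
  have e : blf z0 ρ z ≠ 0 := blf_ne (by linarith) hρ
  have e0 : ‖-(starRingEnd ℂ) (ρ - z0) / ((29/10:ℝ):ℂ)‖ = ‖ρ - z0‖ / ‖(29/10:ℝ)‖ := by
    rw [norm_div, norm_neg, Complex.norm_conj, Complex.norm_real]
  rw [norm_div, e0, div_le_iff₀ (norm_pos_iff.mpr e)]
  unfold blf
  have e5 : ∀ X : ℂ, ‖X / ((29/10:ℝ):ℂ)‖ = ‖X‖ / ‖(29/10:ℝ)‖ := fun X => by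
    rw [norm_div, Complex.norm_real]
  rw [e5]
  have h1 : ‖((29/10:ℝ)^2 : ℂ) - (starRingEnd ℂ) (ρ - z0) * (z - z0)‖ ≥ 85/100 := by
    have := norm_sub_norm_le ((29/10:ℝ)^2 : ℂ) ((starRingEnd ℂ) (ρ - z0) * (z - z0))
    rw [norm_mul, Complex.norm_conj, norm_pow, Complex.norm_real] at this
    have h3 : ‖ρ - z0‖ * ‖z - z0‖ ≤ 28/10 * (27/10) := by gcongr
    norm_num at this h3 ⊢
    linarith
  rw [← mul_div_assoc]
  gcongr
  linarith

lemma blf_center {z0 ρ : ℂ} (hρ : ‖ρ - z0‖ ≤ 28/10) : (29/28) * ‖z0 - ρ‖ ≤ ‖blf z0 ρ z0‖ := by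
  unfold blf
  simp
  rw [norm_sub_rev]
  norm_num
  linarith

lemma logder_bound {G : ℂ → ℂ} (hG : Differentiable ℂ G) (z0 : ℂ) {M : ℝ} (hM : 0 < M)
    (hne : ∀ z, ‖z - z0‖ ≤ 28/10 → G z ≠ 0)
    (hb : ∀ z, ‖z - z0‖ ≤ 28/10 → ‖G z‖ ≤ Real.exp M * ‖G z0‖) {z : ℂ} (hz : ‖z - z0‖ ≤ 27/10) :
    ‖logDeriv G z‖ ≤ 2750 * M := by
  set H : ℂ → ℂ := fun w => G (z0 + w)
  have hH : Differentiable ℂ H := by fun_prop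
  have hHne : ∀ w ∈ Metric.ball (0:ℂ) (28/10), H w ≠ 0 := by
    intro w hw
    apply hne; simpa using (mem_ball_zero_iff.mp hw).le
  have hd : DifferentiableOn ℂ (fun w => deriv H w / H w) (Metric.ball 0 (28/10)) := by
    refine DifferentiableOn.div ?_ hH.differentiableOn hHne
    exact (hH.differentiableOn (s := Set.univ)).deriv isOpen_univ |>.mono (Set.subset_univ _)
  obtain ⟨φ, hφ0, hφ⟩ := (hd.isExactOn_ball).with_val_at 0 0
  have hφd : DifferentiableOn ℂ φ (Metric.ball 0 (28/10)) :=
    fun w hw => (hφ w hw).differentiableAt.differentiableWithinAt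
  have hconst : ∀ w ∈ Metric.ball (0:ℂ) (28/10), H w * Complex.exp (-φ w) = H 0 := by
    intro w hw
    have hD : ∀ w ∈ Metric.ball (0:ℂ) (28/10),
        HasDerivAt (fun w => H w * Complex.exp (-φ w)) 0 w := by
      intro w hw
      have := ((hH w).hasDerivAt).mul ((hφ w hw).neg.cexp)
      refine this.congr_deriv ?_
      have := hHne w hw
      field_simp
      ring
    have := (convex_ball (0:ℂ) (28/10)).is_const_of_fderivWithin_eq_zero (𝕜 := ℂ)
      (f := fun w => H w * Complex.exp (-φ w)) (x := w) (y := 0)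
      (fun w hw => (hD w hw).differentiableAt.differentiableWithinAt)
      (fun w hw => by
        rw [fderivWithin_of_isOpen Metric.isOpen_ball hw]
        ext; simp [(hD w hw).deriv]) hw (by simp)
    simpa [hφ0] using this
  have hre : Set.MapsTo φ (Metric.ball 0 (28/10)) {z | z.re ≤ M} := by
    intro w hw
    have h0 : H 0 ≠ 0 := hHne 0 (by simp)
    have h1 : ‖H w‖ = ‖H 0‖ * Real.exp ((φ w).re) := by
      rw [← hconst w hw, norm_mul, Complex.norm_exp, mul_assoc, ← Real.exp_add]
      simp
    have h2 : ‖H w‖ ≤ Real.exp M * ‖H 0‖ := by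
      have := hb (z0 + w) (by simpa using (mem_ball_zero_iff.mp hw).le)
      simpa [H] using this
    rw [h1, mul_comm] at h2
    have := le_of_mul_le_mul_right h2 (norm_pos_iff.mpr h0)
    exact Real.exp_le_exp.mp this
  have hbc : ∀ w, ‖w‖ ≤ 275/100 → ‖φ w‖ ≤ 110 * M := by
    intro w hw
    have := Complex.borelCaratheodory_zero hM hφd hre (by norm_num) (z := w)
      (by rw [mem_ball_zero_iff]; linarith) hφ0
    refine this.trans ?_
    rw [div_le_iff₀ (by linarith)]
    nlinarith
  set w := z - z0
  have hwball : w ∈ Metric.ball (0:ℂ) (28/10) := by rw [mem_ball_zero_iff]; linarith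
  have hsub : Metric.closedBall w (4/100) ⊆ Metric.ball (0:ℂ) (28/10) := by
    intro x hx
    rw [mem_ball_zero_iff]
    have h1 : ‖x - w‖ ≤ 4/100 := by simpa [dist_eq_norm] using hx
    have := norm_add_le (x - w) w
    simp at this
    linarith
  have hder := Complex.norm_deriv_le_of_forall_mem_sphere_norm_le (c := w) (R := 4/100)
    (C := 110 * M) (f := φ) (by norm_num)
    ((hφd.mono hsub).diffContOnCl_ball subset_rfl) (by
      intro x hx
      apply hbc
      have h1 : ‖x - w‖ = 4/100 := by simpa [dist_eq_norm] using hx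
      have := norm_add_le (x - w) w
      simp at this
      linarith)
  rw [(hφ w hwball).deriv] at hder
  have hlast : deriv H w / H w = logDeriv G z := by
    rw [logDeriv_apply]
    have : deriv H w = deriv G z := by
      simp only [H]
      rw [deriv_comp_const_add]
      simp [w]
    rw [this]; simp [H, w]
  rw [hlast] at hder
  refine hder.trans (le_of_eq (by ring))

lemma loc_lemma {g : ℂ → ℂ} (hg : Differentiable ℂ g) (z0 : ℂ) (hg0 : g z0 ≠ 0) {M : ℝ}
    (hM : 0 < M) (hb : ∀ z, ‖z - z0‖ ≤ 29/10 → ‖g z‖ ≤ Real.exp M * ‖g z0‖) :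
    ∃ Z : Finset ℂ, (∀ ρ, ρ ∈ Z ↔ g ρ = 0 ∧ ‖ρ - z0‖ ≤ 28/10) ∧
      (∑ ρ ∈ Z, (analyticOrderNatAt g ρ : ℝ)) ≤ 29 * M ∧
      ∀ z, ‖z - z0‖ ≤ 27/10 → g z ≠ 0 →
        ‖logDeriv g z - ∑ ρ ∈ Z, (analyticOrderNatAt g ρ : ℂ) / (z - ρ)‖ ≤ 3000 * M := by
  have hana : AnalyticOnNhd ℂ g Set.univ := fun z _ => hg.analyticAt z
  have hfin : ({ρ | g ρ = 0 ∧ ‖ρ - z0‖ ≤ 28/10}).Finite := by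
    have h1 : g⁻¹' {0}ᶜ ∈ codiscrete ℂ :=
      hana.preimage_zero_mem_codiscrete hg0
    have h2 := (isCompact_closedBall z0 (28/10)).finite_sdiff_of_mem_codiscreteWithin
      (Filter.codiscreteWithin_mono (Set.subset_univ _) h1)
    refine h2.subset ?_
    rintro ρ ⟨h, h'⟩
    exact ⟨by simpa [dist_eq_norm] using h', by simpa using h⟩
  have htop : ∀ ρ, analyticOrderAt g ρ ≠ ⊤ := by
    intro ρ h
    rw [analyticOrderAt_eq_top] at h
    have := hana.eqOn_zero_of_preconnected_of_eventuallyEq_zero isPreconnected_univ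
      (Set.mem_univ ρ) h
    exact hg0 (this (Set.mem_univ z0))
  refine ⟨hfin.toFinset, by simp, ?_⟩
  set Z := hfin.toFinset
  have hZ : ∀ ρ ∈ Z, g ρ = 0 ∧ ‖ρ - z0‖ ≤ 28/10 := by simp [Z]
  obtain ⟨h, hh, hh0, hgh⟩ := fac_fin Z hg (fun ρ _ => htop ρ)
  set m := analyticOrderNatAt g
  set B : ℂ → ℂ := fun z => ∏ ρ ∈ Z, (blf z0 ρ z) ^ (m ρ)
  have hB : Differentiable ℂ B := by
    have := blf_diff
    simp only [B]; fun_prop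
  set G : ℂ → ℂ := fun z => B z * h z
  have hG : Differentiable ℂ G := hB.mul hh
  have hhne : ∀ z, ‖z - z0‖ ≤ 28/10 → h z ≠ 0 := by
    intro z hz h0
    by_cases hz' : z ∈ Z
    · exact hh0 z hz' h0
    · apply hz'
      simp only [Z, Set.Finite.mem_toFinset, Set.mem_ofPred_eq]
      exact ⟨by rw [hgh, h0, mul_zero], hz⟩
  have hGne : ∀ z, ‖z - z0‖ ≤ 28/10 → G z ≠ 0 := by
    intro z hz
    refine mul_ne_zero (Finset.prod_ne_zero_iff.mpr fun ρ hρ => pow_ne_zero _ ?_) (hhne z hz)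
    exact blf_ne hz (hZ ρ hρ).2
  have hGb : ∀ z, ‖z - z0‖ ≤ 29/10 → ‖G z‖ ≤ Real.exp M * ‖g z0‖ := by
    intro z hz
    refine Complex.norm_le_of_forall_mem_frontier_norm_le (U := Metric.ball z0 (29/10))
      Metric.isBounded_ball hG.diffContOnCl ?_ (z := z) ?_
    · intro w hw
      rw [frontier_ball z0 (by norm_num)] at hw
      have hw' : ‖w - z0‖ = 29/10 := by simpa [dist_eq_norm] using hw
      refine le_trans (le_of_eq ?_) (hb w hw'.le)
      rw [hgh w]
      simp only [G, B, norm_mul, norm_prod, norm_pow, blf_sphere hw']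
    · rw [closure_ball z0 (by norm_num)]; simpa [dist_eq_norm] using hz
  have hGc : (29/28:ℝ) ^ (∑ ρ ∈ Z, m ρ) * ‖g z0‖ ≤ ‖G z0‖ := by
    rw [hgh z0]
    simp only [G, B, norm_mul, norm_prod, norm_pow]
    rw [← Finset.prod_pow_eq_pow_sum, ← mul_assoc, ← Finset.prod_mul_distrib]
    gcongr with ρ hρ
    rw [← mul_pow]
    gcongr
    exact blf_center (hZ ρ hρ).2
  have hg0p : 0 < ‖g z0‖ := norm_pos_iff.mpr hg0
  have hsum : (∑ ρ ∈ Z, (m ρ : ℝ)) ≤ 29 * M := by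
    have h1 : (29/28:ℝ) ^ (∑ ρ ∈ Z, m ρ) ≤ Real.exp M :=
      le_of_mul_le_mul_right (hGc.trans (hGb z0 (by simp; norm_num))) hg0p
    have h2 := Real.log_le_log (by positivity) h1
    rw [Real.log_exp, Real.log_pow] at h2
    have h3 : (1/29:ℝ) ≤ Real.log (29/28) := by
      have := Real.one_sub_inv_le_log_of_pos (x := 29/28) (by norm_num)
      norm_num at this ⊢; linarith
    have h4 : (0:ℝ) ≤ ((∑ ρ ∈ Z, m ρ : ℕ) : ℝ) := Nat.cast_nonneg _
    push_cast at h2 h4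
    nlinarith
  refine ⟨hsum, ?_⟩
  intro z hz hgz
  have hGle : ‖g z0‖ ≤ ‖G z0‖ := by
    refine le_trans ?_ hGc
    have : (1:ℝ) ≤ (29/28:ℝ) ^ (∑ ρ ∈ Z, m ρ) := one_le_pow₀ (by norm_num)
    nlinarith
  have hGl := logder_bound hG z0 hM hGne (fun z hz => (hGb z (by linarith)).trans (by gcongr)) hz
  have hzne : ∀ ρ ∈ Z, z - ρ ≠ 0 := by
    intro ρ hρ h0
    exact hgz (by rw [sub_eq_zero.mp h0]; exact (hZ ρ hρ).1)
  have hbne : ∀ ρ ∈ Z, blf z0 ρ z ≠ 0 := fun ρ hρ => blf_ne (by linarith) (hZ ρ hρ).2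
  have e1 : logDeriv G z = (∑ ρ ∈ Z, (m ρ : ℂ) * logDeriv (blf z0 ρ) z) + logDeriv h z := by
    simp only [G, B]
    rw [logDeriv_mul z (Finset.prod_ne_zero_iff.mpr fun ρ hρ => pow_ne_zero _ (hbne ρ hρ))
      (hhne z (by linarith)) (hB z) (hh z)]
    rw [logDeriv_prod (f := fun ρ z => (blf z0 ρ z) ^ (m ρ)) (fun ρ hρ => pow_ne_zero _ (hbne ρ hρ))
      (fun ρ hρ => ((blf_diff z0 ρ).pow _) z)]
    congr 1
    refine Finset.sum_congr rfl fun ρ hρ => ?_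
    rw [logDeriv_fun_pow (blf_diff z0 ρ z)]
  have e2 : logDeriv g z = (∑ ρ ∈ Z, (m ρ : ℂ) / (z - ρ)) + logDeriv h z := by
    have : g = fun z => (∏ ρ ∈ Z, (z - ρ) ^ (m ρ)) * h z := funext hgh
    conv_lhs => rw [this]
    rw [logDeriv_mul z (Finset.prod_ne_zero_iff.mpr fun ρ hρ => pow_ne_zero _ (hzne ρ hρ))
      (hhne z (by linarith)) (by fun_prop) (hh z)]
    rw [logDeriv_prod (f := fun ρ z => (z - ρ) ^ (m ρ)) (fun ρ hρ => pow_ne_zero _ (hzne ρ hρ))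
      (fun ρ hρ => by fun_prop)]
    congr 1
    refine Finset.sum_congr rfl fun ρ hρ => ?_
    rw [logDeriv_fun_pow (by fun_prop)]
    simp [logDeriv_apply, div_eq_mul_inv]
  have e3 : logDeriv g z - ∑ ρ ∈ Z, (m ρ : ℂ) / (z - ρ) =
      logDeriv G z - ∑ ρ ∈ Z, (m ρ : ℂ) * logDeriv (blf z0 ρ) z := by
    rw [e1, e2]; ring
  rw [e3]
  have e4 : ‖∑ ρ ∈ Z, (m ρ : ℂ) * logDeriv (blf z0 ρ) z‖ ≤ 4 * ∑ ρ ∈ Z, (m ρ : ℝ) := by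
    rw [Finset.mul_sum]
    refine norm_sum_le_of_le _ fun ρ hρ => ?_
    rw [norm_mul, Complex.norm_natCast, mul_comm]
    gcongr
    exact blf_logDeriv hz (hZ ρ hρ).2
  have := norm_sub_le (logDeriv G z) (∑ ρ ∈ Z, (m ρ : ℂ) * logDeriv (blf z0 ρ) z)
  linarith



/-- local log size -/
def ell (t : ℝ) : ℝ := Real.log (|t| + 3)

lemma one_le_ell (t : ℝ) : 1 ≤ ell t := by
  unfold ell
  rw [Real.le_log_iff_exp_le (by positivity)]
  have := Real.exp_one_lt_d9
  have := abs_nonneg t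
  linarith

/-- multiplicity for zeta1 -/
def zmult (ρ : ℂ) : ℕ := analyticOrderNatAt zeta1 ρ

/-- log derivative of zeta1 -/
def Psi (s : ℂ) : ℂ := logDeriv zeta1 s

lemma zeta1_top (ρ : ℂ) : analyticOrderAt zeta1 ρ ≠ ⊤ := by
  intro h
  rw [analyticOrderAt_eq_top] at h
  have hana : AnalyticOnNhd ℂ zeta1 Set.univ := fun z _ => zeta1_diff.analyticAt z
  have := hana.eqOn_zero_of_preconnected_of_eventuallyEq_zero isPreconnected_univ
    (Set.mem_univ ρ) h
  have := this (Set.mem_univ 1)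
  rw [zeta1_one] at this
  simp at this

lemma half_ne_one (γ : ℝ) : (1/2 + γ * Complex.I : ℂ) ≠ 1 := by
  intro h
  have := congrArg Complex.re h
  norm_num at this

lemma ordMult_eq (γ : ℝ) : ordMult γ = zmult (1/2 + γ * Complex.I) := by
  set ρ : ℂ := 1/2 + γ * Complex.I with hρ
  have h1 : ρ ≠ 1 := half_ne_one γ
  have hζ : AnalyticAt ℂ riemannZeta ρ := by
    have : DifferentiableOn ℂ riemannZeta {1}ᶜ := fun z hz =>
      (differentiableAt_riemannZeta hz).differentiableWithinAt
    exact this.analyticAt (isOpen_compl_singleton.mem_nhds h1)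
  have hev : zeta1 =ᶠ[nhds ρ] (fun z => z - 1) * riemannZeta := by
    filter_upwards [isOpen_compl_singleton.mem_nhds h1] with z hz
    exact zeta1_of_ne hz
  have hA : AnalyticAt ℂ (fun z : ℂ => z - 1) ρ := by fun_prop
  have h2 : analyticOrderAt zeta1 ρ = analyticOrderAt riemannZeta ρ := by
    rw [analyticOrderAt_congr hev, analyticOrderAt_mul hA hζ,
      hA.analyticOrderAt_eq_zero.mpr (sub_ne_zero.mpr h1), zero_add]
  have h3 : analyticOrderAt riemannZeta ρ = (zmult ρ : ℕ) := by
    rw [← h2, zmult, Nat.cast_analyticOrderNatAt (zeta1_top ρ)]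
  rw [analyticOrderAt_eq_nat_iff_iteratedDeriv_eq_zero hζ] at h3
  show sInf {n : ℕ | iteratedDeriv n riemannZeta ρ ≠ 0} = zmult ρ
  apply le_antisymm
  · exact Nat.sInf_le h3.2
  · apply le_csInf ⟨_, h3.2⟩
    intro b hb
    by_contra hlt
    exact hb (h3.1 b (not_le.mp hlt))

lemma ordMult_pos {γ : ℝ} (h : riemannZeta (1/2 + γ * Complex.I) = 0) : 1 ≤ ordMult γ := by
  rw [ordMult_eq, zmult]
  have h0 : zeta1 (1/2 + γ * Complex.I) = 0 := by
    rw [zeta1_eq_zero_iff]; exact ⟨half_ne_one γ, h⟩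
  have h1 := (zeta1_diff.analyticAt (1/2 + γ * Complex.I)).analyticOrderAt_ne_zero.mpr h0
  rw [Nat.one_le_iff_ne_zero]
  intro h2
  apply h1
  rw [← Nat.cast_analyticOrderNatAt (zeta1_top _), h2]; rfl

lemma zero_re (hRH : RiemannHypothesis) {s : ℂ} (hs : 0 < s.re) (h : zeta1 s = 0) :
    s.re = 1/2 := by
  rw [zeta1_eq_zero_iff] at h
  refine hRH s h.2 ?_ h.1
  rintro ⟨n, rfl⟩
  simp at hs
  have : (0:ℝ) ≤ n := Nat.cast_nonneg n
  linarith

lemma Psi_diffOn (hRH : RiemannHypothesis) {s : ℂ} (hs : 1/2 < s.re) : DifferentiableAt ℂ Psi s := by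
  unfold Psi logDeriv
  have h0 : zeta1 s ≠ 0 := fun h => by
    have := zero_re hRH (by linarith) h
    linarith
  have : DifferentiableAt ℂ (deriv zeta1) s :=
    ((zeta1_diff.differentiableOn (s := Set.univ)).deriv isOpen_univ).differentiableAt univ_mem
  exact this.div (zeta1_diff s) h0

lemma zloc (hRH : RiemannHypothesis) : ∀ t : ℝ, ∃ Z : Finset ℂ,
    (∀ ρ ∈ Z, ρ.re = 1/2) ∧
    (∀ γ : ℝ, riemannZeta (1/2 + γ * Complex.I) = 0 → |γ - t| ≤ 1 → (1/2 + γ * Complex.I : ℂ) ∈ Z) ∧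
    (∑ ρ ∈ Z, (zmult ρ : ℝ)) ≤ 30000 * ell t ∧
    ∀ σ : ℝ, 1/2 < σ → σ ≤ 4 →
      ‖Psi (σ + t * Complex.I) - ∑ ρ ∈ Z, (zmult ρ : ℂ) / (σ + t * Complex.I - ρ)‖
        ≤ 30000 * ell t := by
  intro t
  set z0 : ℂ := 3 + t * Complex.I with hz0
  have hl := one_le_ell t
  have hlow := zeta1_lower t
  have hg0 : zeta1 z0 ≠ 0 := by
    intro h; rw [← hz0, h] at hlow; norm_num at hlow
  have hz0n : ‖z0‖ ≤ 3 + |t| := by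
    refine (norm_add_le _ _).trans ?_
    simp
  have hb : ∀ z, ‖z - z0‖ ≤ 29/10 → ‖zeta1 z‖ ≤ Real.exp (10 * ell t) * ‖zeta1 z0‖ := by
    intro z hz
    have hre : 1/10 ≤ z.re := by
      have h1 := (Complex.abs_re_le_norm (z - z0)).trans hz
      have h2 : (z - z0).re = z.re - 3 := by simp [hz0]
      rw [h2, abs_le] at h1
      linarith [h1.1]
    have h2 := zeta1_growth hre
    have h3 : ‖z‖ ≤ |t| + 59/10 := by
      have := norm_add_le (z - z0) z0
      simp at this
      linarith
    set u := |t| + 3 with hu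
    have hu3 : 3 ≤ u := by have := abs_nonneg t; linarith
    have h4 : Real.exp (10 * ell t) = u ^ 10 := by
      rw [show (10:ℝ) * ell t = (10:ℕ) * ell t by norm_num, Real.exp_nat_mul, ell,
        Real.exp_log (by positivity)]
    rw [h4]
    have h5 : 11 * (‖z‖+1)^2 ≤ 60 * u^2 := by
      have : ‖z‖ + 1 ≤ 23/10 * u := by linarith
      have : (‖z‖+1)^2 ≤ (23/10*u)^2 := by gcongr
      nlinarith
    have h6 : (3:ℝ)^8 ≤ u^8 := by gcongr
    have h7 : 60 * u^2 ≤ u^10 * (1/2) := by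
      have : u^10 = u^8 * u^2 := by ring
      rw [this]
      have : 0 ≤ u^2 := by positivity
      nlinarith
    calc _ ≤ _ := h2
      _ ≤ _ := h5
      _ ≤ _ := h7
      _ ≤ _ := by gcongr
  obtain ⟨Z, hZ, hsum, hlog⟩ := loc_lemma zeta1_diff z0 hg0 (M := 10 * ell t) (by linarith) hb
  refine ⟨Z, ?_, ?_, ?_, ?_⟩
  · intro ρ hρ
    obtain ⟨h1, h2⟩ := (hZ ρ).mp hρ
    apply zero_re hRH _ h1
    have h1 := (Complex.abs_re_le_norm (ρ - z0)).trans h2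
    have h2 : (ρ - z0).re = ρ.re - 3 := by simp [hz0]
    rw [h2, abs_le] at h1
    linarith [h1.1]
  · intro γ hγ ht
    rw [hZ]
    refine ⟨(zeta1_eq_zero_iff _).mpr ⟨half_ne_one γ, hγ⟩, ?_⟩
    have : (1/2 + γ * Complex.I - z0 : ℂ) = ((-5/2:ℝ):ℂ) + ((γ - t : ℝ):ℂ) * Complex.I := by
      rw [hz0]; push_cast; ring
    rw [this, Complex.norm_add_mul_I, Real.sqrt_le_left (by norm_num)]
    have : (γ-t)^2 ≤ 1 := by rw [sq_le_one_iff_abs_le_one]; exact ht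
    norm_num; linarith
  · refine le_trans hsum ?_
    nlinarith
  · intro σ h1 h2
    have hne : zeta1 (σ + t * Complex.I) ≠ 0 := fun h => by
      have := zero_re hRH (by simp; linarith) h
      simp at this; linarith
    have := hlog (σ + t * Complex.I) (by
      have : (σ + t * Complex.I - z0 : ℂ) = ((σ - 3:ℝ):ℂ) := by
        rw [hz0]; push_cast; ring
      rw [this, Complex.norm_real, Real.norm_eq_abs, abs_le]
      constructor <;> linarith) hne
    refine this.trans ?_
    linarith

lemma Psi_B (hRH : RiemannHypothesis) (σ t : ℝ) (h1 : 1/2 < σ) (h2 : σ ≤ 4) :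
    ‖Psi (σ + t * Complex.I)‖ ≤ 30000 * (1/(σ - 1/2) + 1) * ell t := by
  obtain ⟨Z, hre, -, hs, hl⟩ := zloc hRH t
  have := hl σ h1 h2
  have h3 : ‖∑ ρ ∈ Z, (zmult ρ : ℂ) / (σ + t * Complex.I - ρ)‖ ≤
      ∑ ρ ∈ Z, (zmult ρ : ℝ) * (1 / (σ - 1/2)) := by
    refine norm_sum_le_of_le _ fun ρ hρ => ?_
    rw [norm_div, Complex.norm_natCast, div_eq_mul_one_div]
    gcongr ?_ * ?_
    · have h0 : 0 < σ - 1/2 := by linarith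
      apply one_div_le_one_div_of_le h0
      have := Complex.abs_re_le_norm (σ + t * Complex.I - ρ)
      simp [hre ρ hρ] at this
      rw [abs_of_pos (by linarith)] at this
      norm_num at this ⊢; linarith
  rw [← Finset.sum_mul] at h3
  have h4 := norm_add_le (Psi (σ + t * Complex.I) - ∑ ρ ∈ Z, (zmult ρ : ℂ) / (σ + t * Complex.I - ρ))
    (∑ ρ ∈ Z, (zmult ρ : ℂ) / (σ + t * Complex.I - ρ))
  rw [sub_add_cancel] at h4
  have h5 : (∑ ρ ∈ Z, (zmult ρ : ℝ)) * (1 / (σ - 1/2)) ≤ 30000 * ell t * (1 / (σ - 1/2)) := by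
    have : 0 < σ - 1/2 := by linarith
    gcongr
  linarith

lemma cmplx_H {a A u : ℝ} (ha : 0 < a) (hA : 1 ≤ A) :
    ‖1 / ((a:ℂ) + u * Complex.I) - 1 / ((A * a : ℝ) + u * Complex.I : ℂ)‖ ≤
      (A - 1) * (1 / ((A * a : ℝ) + u * Complex.I : ℂ)).re := by
  have hAa : 0 < A * a := by positivity
  set w : ℂ := (a:ℂ) + u * Complex.I with hw
  set W : ℂ := ((A * a : ℝ):ℂ) + u * Complex.I with hW
  have hwre : w.re = a := by simp [hw]
  have hWre : W.re = A * a := by simp [hW]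
  have hw0 : w ≠ 0 := fun h => by rw [h] at hwre; simp at hwre; linarith
  have hW0 : W ≠ 0 := fun h => by rw [h] at hWre; simp at hWre; rcases hWre <;> linarith
  have h1 : ‖W‖ ≤ A * ‖w‖ := by
    rw [hw, hW, Complex.norm_add_mul_I, Complex.norm_add_mul_I]
    apply Real.sqrt_le_iff.mpr
    refine ⟨by positivity, ?_⟩
    rw [mul_pow A (√_), Real.sq_sqrt (by positivity)]
    nlinarith [sq_nonneg u, mul_nonneg (sub_nonneg.mpr hA) (sq_nonneg u)]
  have h2 : 1 / w - 1 / W = ((A - 1) * a : ℝ) / (w * W) := by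
    rw [div_sub_div _ _ hw0 hW0]; congr 1
    rw [hw, hW]; push_cast; ring
  have hwp : 0 < ‖w‖ := norm_pos_iff.mpr hw0
  have hWp : 0 < ‖W‖ := norm_pos_iff.mpr hW0
  rw [h2, norm_div, norm_mul, Complex.norm_real, Real.norm_of_nonneg (by
    have : 0 ≤ A - 1 := by linarith
    positivity)]
  rw [one_div, Complex.inv_re, hWre, Complex.normSq_eq_norm_sq]
  rw [mul_div_assoc, div_eq_mul_inv a]
  apply mul_le_mul_of_nonneg_left _ (by linarith)
  rw [← div_eq_mul_inv, div_le_div_iff₀ (by positivity) (by positivity)]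
  have := mul_le_mul_of_nonneg_right h1 (mul_nonneg ha.le hWp.le)
  nlinarith

lemma Psi_H (hRH : RiemannHypothesis) (a A t : ℝ) (ha : 0 < a) (hA : 1 ≤ A) (hAa : A * a ≤ 1) :
    ‖Psi ((1/2 + a : ℝ) + t * Complex.I)‖ ≤
      A * ‖Psi ((1/2 + A * a : ℝ) + t * Complex.I)‖ + 60000 * A * ell t := by
  obtain ⟨Z, hre, -, -, hl⟩ := zloc hRH t
  have haA : a ≤ A * a := by nlinarith
  have i1 := hl (1/2 + a) (by linarith) (by linarith)
  have i2 := hl (1/2 + A * a) (by linarith) (by linarith)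
  set S1 := ∑ ρ ∈ Z, (zmult ρ : ℂ) / ((1/2 + a : ℝ) + t * Complex.I - ρ)
  set S2 := ∑ ρ ∈ Z, (zmult ρ : ℂ) / ((1/2 + A * a : ℝ) + t * Complex.I - ρ)
  set P1 := Psi ((1/2 + a : ℝ) + t * Complex.I)
  set P2 := Psi ((1/2 + A * a : ℝ) + t * Complex.I)
  have hS : ‖S1 - S2‖ ≤ (A - 1) * S2.re := by
    simp only [S1, S2]
    rw [← Finset.sum_sub_distrib, Complex.re_sum, Finset.mul_sum]
    refine norm_sum_le_of_le _ fun ρ hρ => ?_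
    have e1 : (((1/2 + a : ℝ):ℂ) + t * Complex.I - ρ) = (a:ℂ) + ((t - ρ.im : ℝ):ℂ) * Complex.I := by
      apply Complex.ext <;> simp [hre ρ hρ]
    have e2 : (((1/2 + A * a : ℝ):ℂ) + t * Complex.I - ρ) = ((A * a : ℝ):ℂ) + ((t - ρ.im : ℝ):ℂ) * Complex.I := by
      apply Complex.ext <;> simp [hre ρ hρ]
    rw [e1, e2]
    have := cmplx_H (u := t - ρ.im) ha hA
    rw [div_eq_mul_one_div, div_eq_mul_one_div (zmult ρ : ℂ) (((A * a : ℝ):ℂ) + _), ← mul_sub, norm_mul,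
      Complex.norm_natCast, ← Complex.ofReal_natCast, Complex.re_ofReal_mul]
    have h0 : (0:ℝ) ≤ zmult ρ := Nat.cast_nonneg _
    nlinarith [mul_le_mul_of_nonneg_left this h0]
  have hS2 : S2.re ≤ ‖S2‖ := Complex.re_le_norm S2
  have n1 : ‖S2‖ ≤ ‖P2‖ + 30000 * ell t := by
    have := norm_sub_norm_le S2 P2
    rw [norm_sub_rev] at this; linarith
  have n2 : ‖P1‖ ≤ ‖P1 - S1‖ + ‖S1 - S2‖ + ‖S2‖ := by
    have := norm_add₃_le (a := P1 - S1) (b := S1 - S2) (c := S2)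
    simpa using this
  have hlt := one_le_ell t
  have n3 : (A - 1) * S2.re ≤ (A-1) * ‖S2‖ := mul_le_mul_of_nonneg_left hS2 (by linarith)
  have n4 : A * ‖S2‖ ≤ A * (‖P2‖ + 30000 * ell t) := by gcongr
  nlinarith

lemma Psi_W (hRH : RiemannHypothesis) (b t : ℝ) (hb : 0 < b) (hb1 : b ≤ 1) (S : Finset ℝ)
    (hS : ∀ γ ∈ S, riemannZeta (1/2 + γ * Complex.I) = 0 ∧ |γ - t| ≤ b) :
    (∑ γ ∈ S, (ordMult γ : ℝ)) ≤
      2 * b * (‖Psi ((1/2 + b : ℝ) + t * Complex.I)‖ + 30000 * ell t) := by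
  classical
  obtain ⟨Z, hre, hin, -, hl⟩ := zloc hRH t
  have i2 := hl (1/2 + b) (by linarith) (by linarith)
  set S2 := ∑ ρ ∈ Z, (zmult ρ : ℂ) / ((1/2 + b : ℝ) + t * Complex.I - ρ)
  set P2 := Psi ((1/2 + b : ℝ) + t * Complex.I)
  have hS2 : S2.re ≤ ‖S2‖ := Complex.re_le_norm S2
  have n1 : ‖S2‖ ≤ ‖P2‖ + 30000 * ell t := by
    have := norm_sub_norm_le S2 P2
    rw [norm_sub_rev] at this; linarith
  have hinj : Set.InjOn (fun γ : ℝ => (1/2 + γ * Complex.I : ℂ)) S := by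
    intro x _ y _ h
    have := congrArg Complex.im h
    simpa using this
  have hterm : ∀ ρ ∈ Z, ((zmult ρ : ℂ) / ((1/2 + b : ℝ) + t * Complex.I - ρ)).re =
      zmult ρ * (b / (b^2 + (t - ρ.im)^2)) := by
    intro ρ hρ
    have e2 : (((1/2 + b : ℝ):ℂ) + t * Complex.I - ρ) = (b:ℂ) + ((t - ρ.im : ℝ):ℂ) * Complex.I := by
      apply Complex.ext <;> simp [hre ρ hρ]
    rw [e2, div_eq_mul_inv, ← Complex.ofReal_natCast, Complex.re_ofReal_mul, Complex.inv_re,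
      Complex.normSq_add_mul_I]
    simp
  have key : (∑ γ ∈ S, (ordMult γ : ℝ)) * (1/(2*b)) ≤ S2.re := by
    simp only [S2]
    rw [Complex.re_sum, Finset.sum_congr rfl hterm, Finset.sum_mul]
    calc _ ≤ ∑ γ ∈ S, (zmult (1/2 + γ * Complex.I) : ℝ) *
            (b / (b^2 + (t - (1/2 + γ * Complex.I : ℂ).im)^2)) := by
          refine Finset.sum_le_sum fun γ hγ => ?_
          rw [ordMult_eq]
          have hg := (hS γ hγ).2
          gcongr ?_ * ?_
          have h1 : (t - (1/2 + γ * Complex.I : ℂ).im)^2 ≤ b^2 := by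
            rw [sq_le_sq]
            simp
            rw [abs_sub_comm, abs_of_pos hb]; exact hg
          rw [div_le_div_iff₀ (by positivity) (by positivity)]
          nlinarith
      _ = ∑ ρ ∈ S.image (fun γ : ℝ => (1/2 + γ * Complex.I : ℂ)),
            (zmult ρ : ℝ) * (b / (b^2 + (t - ρ.im)^2)) := by
          rw [Finset.sum_image hinj]
      _ ≤ _ := by
          refine Finset.sum_le_sum_of_subset_of_nonneg ?_ ?_
          · intro ρ hρ
            obtain ⟨γ, hγ, rfl⟩ := Finset.mem_image.mp hρ
            exact hin γ (hS γ hγ).1 ((hS γ hγ).2.trans hb1)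
          · intros; positivity
  rw [mul_one_div, div_le_iff₀ (by positivity)] at key
  nlinarith



lemma geom_exp_bound (α η : ℝ) (J : ℕ) (hη : 0 < η) (h1 : η ≤ |α|) (h2 : |α| ≤ 2) :
    ‖∑ j ∈ Finset.range J, Complex.exp (Complex.I * ((j * α : ℝ):ℂ))‖ ≤ π / η := by
  set w : ℂ := Complex.exp (Complex.I * (α:ℂ)) with hw
  have hpow : ∀ j : ℕ, Complex.exp (Complex.I * ((j * α : ℝ):ℂ)) = w ^ j := by
    intro j
    rw [hw, ← Complex.exp_nat_mul]; congr 1; push_cast; ring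
  simp_rw [hpow]
  have hlow : 2 * |α| / π ≤ ‖w - 1‖ := by
    rw [hw, Complex.norm_exp_I_mul_ofReal_sub_one, norm_mul, Real.norm_eq_abs, Real.norm_eq_abs]
    have := Real.mul_abs_le_abs_sin (x := α/2) (by
      rw [abs_div]; norm_num; have := Real.pi_gt_three; linarith)
    rw [abs_div] at this
    norm_num at this ⊢
    calc 2 * |α| / π = 2 * (|α| / π) := by ring
      _ ≤ _ := by linarith
  have hpos : 0 < 2 * |α| / π := by have : 0 < |α| := by linarith
                                    positivity
  have hne : w ≠ 1 := by
    intro h; rw [h] at hlow; simp at hlow; linarith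
  rw [geom_sum_eq hne, norm_div]
  have hwn : ‖w‖ = 1 := by rw [hw, mul_comm]; exact Complex.norm_exp_ofReal_mul_I α
  have hnum : ‖w ^ J - 1‖ ≤ 2 := by
    refine (norm_sub_le _ _).trans ?_
    rw [norm_pow, hwn]; norm_num
  calc _ ≤ 2 / (2 * |α| / π) := by gcongr
    _ = π / |α| := by
      have : 0 < |α| := by linarith
      field_simp
    _ ≤ π / η := by gcongr

lemma mv_lemma {ι : Type*} [DecidableEq ι] (P : Finset ι) (x : ι → ℂ) (θ : ι → ℝ) (η : ℝ)
    (hη : 0 < η) (h2 : ∀ p ∈ P, ∀ q ∈ P, |θ p - θ q| ≤ 2)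
    (hsep : ∀ p ∈ P, ∀ q ∈ P, θ p = θ q ∨ η ≤ |θ p - θ q|) (J : ℕ) :
    ∑ j ∈ Finset.range J, ‖∑ p ∈ P, x p * Complex.exp (Complex.I * ((j * θ p : ℝ):ℂ))‖^2 ≤
      J * (∑ p ∈ P, ∑ q ∈ P, if θ p = θ q then ‖x p‖ * ‖x q‖ else 0)
       + π / η * (∑ p ∈ P, ‖x p‖)^2 := by
  have hsq : ∀ j : ℕ, (((‖∑ p ∈ P, x p * Complex.exp (Complex.I * ((j * θ p : ℝ):ℂ))‖^2 : ℝ)) : ℂ) =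
      ∑ p ∈ P, ∑ q ∈ P, x p * (starRingEnd ℂ) (x q) *
        Complex.exp (Complex.I * ((j * (θ p - θ q) : ℝ):ℂ)) := by
    intro j
    rw [← Complex.normSq_eq_norm_sq, ← Complex.mul_conj, map_sum, Finset.sum_mul_sum]
    refine Finset.sum_congr rfl fun p _ => Finset.sum_congr rfl fun q _ => ?_
    rw [map_mul, ← Complex.exp_conj]
    rw [map_mul, Complex.conj_I, Complex.conj_ofReal]
    have : Complex.exp (Complex.I * ((j * (θ p - θ q) : ℝ):ℂ)) =
        Complex.exp (Complex.I * ((j * θ p : ℝ):ℂ)) * Complex.exp (-Complex.I * ((j * θ q : ℝ):ℂ)) := by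
      rw [← Complex.exp_add]; congr 1; push_cast; ring
    rw [this]; ring
  have htot : ((∑ j ∈ Finset.range J, ‖∑ p ∈ P, x p * Complex.exp (Complex.I * ((j * θ p : ℝ):ℂ))‖^2 : ℝ) : ℂ) =
      ∑ p ∈ P, ∑ q ∈ P, x p * (starRingEnd ℂ) (x q) *
        ∑ j ∈ Finset.range J, Complex.exp (Complex.I * ((j * (θ p - θ q) : ℝ):ℂ)) := by
    rw [Complex.ofReal_sum]
    simp_rw [hsq]
    rw [Finset.sum_comm]
    refine Finset.sum_congr rfl fun p _ => ?_
    rw [Finset.sum_comm]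
    refine Finset.sum_congr rfl fun q _ => ?_
    rw [Finset.mul_sum]
  have hnn : 0 ≤ ∑ j ∈ Finset.range J, ‖∑ p ∈ P, x p * Complex.exp (Complex.I * ((j * θ p : ℝ):ℂ))‖^2 :=
    Finset.sum_nonneg fun _ _ => by positivity
  rw [← abs_of_nonneg hnn, ← Real.norm_eq_abs, ← Complex.norm_real, htot]
  rw [sq, Finset.sum_mul_sum, Finset.mul_sum, Finset.mul_sum, ← Finset.sum_add_distrib]
  refine norm_sum_le_of_le _ fun p hp => ?_
  rw [Finset.mul_sum, Finset.mul_sum, ← Finset.sum_add_distrib]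
  refine norm_sum_le_of_le _ fun q hq => ?_
  rw [norm_mul, norm_mul, Complex.norm_conj]
  have hx : 0 ≤ ‖x p‖ * ‖x q‖ := by positivity
  by_cases h : θ p = θ q
  · simp only [h, if_true, sub_self, mul_zero, Complex.ofReal_zero, Complex.exp_zero,
      Finset.sum_const, Finset.card_range, nsmul_eq_mul, mul_one, Complex.norm_natCast]
    have : 0 ≤ π / η * (‖x p‖ * ‖x q‖) := by positivity
    linarith
  · rcases hsep p hp q hq with h' | h'
    · exact absurd h' h
    · have := geom_exp_bound (θ p - θ q) η J hη h' (h2 p hp q hq)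
      simp only [h, if_false, mul_zero, zero_add]
      calc _ ≤ ‖x p‖ * ‖x q‖ * (π/η) := by gcongr
        _ = _ := by ring

open ArithmeticFunction in
lemma mertens_up (N : ℕ) (hN : 1 ≤ N) :
    ∑ n ∈ Finset.Ioc 0 N, vonMangoldt n / n ≤ 2 * Real.log N := by
  have h := sum_Ioc_mul_zeta_eq_sum vonMangoldt N
  rw [vonMangoldt_mul_zeta] at h
  have h1 : ∑ n ∈ Finset.Ioc 0 N, ArithmeticFunction.log n ≤ N * Real.log N := by
    calc _ ≤ ∑ n ∈ Finset.Ioc 0 N, Real.log N := by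
          refine Finset.sum_le_sum fun n hn => ?_
          rw [Finset.mem_Ioc] at hn
          rw [log_apply]
          apply Real.log_le_log (by exact_mod_cast hn.1) (by exact_mod_cast hn.2)
      _ = _ := by simp
  rw [h] at h1
  have hNp : (0:ℝ) < N := by exact_mod_cast hN
  have h2 : N * ∑ n ∈ Finset.Ioc 0 N, vonMangoldt n / n ≤
      2 * ∑ n ∈ Finset.Ioc 0 N, vonMangoldt n * ((N / n : ℕ) : ℝ) := by
    rw [Finset.mul_sum, Finset.mul_sum]
    refine Finset.sum_le_sum fun n hn => ?_
    rw [Finset.mem_Ioc] at hn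
    have hn0 : (0:ℝ) < n := by exact_mod_cast hn.1
    have h3 : (N:ℝ) / n ≤ 2 * ((N / n : ℕ):ℝ) := by
      rw [div_le_iff₀ hn0]
      have ha : 1 ≤ N / n := (Nat.one_le_div_iff hn.1).mpr hn.2
      have hb : N < n * (N / n + 1) := Nat.lt_mul_div_succ N hn.1
      have hc : N ≤ 2 * (N / n) * n := by nlinarith
      exact_mod_cast hc
    have h4 : 0 ≤ vonMangoldt n := vonMangoldt_nonneg
    calc (N:ℝ) * (vonMangoldt n / n) = vonMangoldt n * (N / n) := by ring
      _ ≤ vonMangoldt n * (2 * ((N / n : ℕ):ℝ)) := by gcongr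
      _ = _ := by ring
  have h5 : N * ∑ n ∈ Finset.Ioc 0 N, vonMangoldt n / n ≤ N * (2 * Real.log N) := by linarith
  exact le_of_mul_le_mul_left h5 hNp



/-- von Mangoldt Dirichlet polynomial -/
def Dir (N : ℕ) (s : ℂ) : ℂ :=
  ∑ n ∈ Finset.Ioc 0 N, (ArithmeticFunction.vonMangoldt n : ℂ) * Complex.exp (-s * (Real.log n : ℂ))

/-- coefficients -/
def xco (s : ℂ) (p : ℕ × ℕ) : ℂ :=
  (ArithmeticFunction.vonMangoldt p.1 : ℂ) * (ArithmeticFunction.vonMangoldt p.2 : ℂ) *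
    Complex.exp (-s * (Real.log ((p.1 * p.2 : ℕ) : ℝ) : ℂ))

lemma log_mul_nat {m n : ℕ} (hm : 0 < m) (hn : 0 < n) :
    Real.log ((m * n : ℕ) : ℝ) = Real.log m + Real.log n := by
  push_cast
  exact Real.log_mul (by positivity) (by positivity)

lemma Dir_sq (N : ℕ) (L σ v : ℝ) (j : ℕ) :
    (Dir N (σ + ((j / L + v : ℝ):ℂ) * Complex.I))^2 =
      ∑ p ∈ Finset.Ioc 0 N ×ˢ Finset.Ioc 0 N, xco (σ + v * Complex.I) p *
        Complex.exp (Complex.I * ((j * (-(Real.log ((p.1 * p.2 : ℕ) : ℝ) / L)) : ℝ):ℂ)) := by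
  rw [Dir, sq, Finset.sum_mul_sum, ← Finset.sum_product']
  refine Finset.sum_congr rfl fun p hp => ?_
  rw [Finset.mem_product, Finset.mem_Ioc, Finset.mem_Ioc] at hp
  rw [xco, log_mul_nat hp.1.1 hp.2.1, mul_assoc _ (Complex.exp _) (Complex.exp _), ← Complex.exp_add,
    mul_mul_mul_comm, ← Complex.exp_add]
  congr 2
  push_cast
  ring

open ArithmeticFunction in
lemma xco_norm {σ v : ℝ} (hσ : 1/2 ≤ σ) {p : ℕ × ℕ} (_ : 0 < p.1) (_ : 0 < p.2) :
    ‖xco (σ + v * Complex.I) p‖ ≤ vonMangoldt p.1 * vonMangoldt p.2 *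
      Real.exp (-(Real.log ((p.1 * p.2 : ℕ) : ℝ)) / 2) := by
  rw [xco, norm_mul, norm_mul, Complex.norm_real, Complex.norm_real,
    Real.norm_of_nonneg vonMangoldt_nonneg, Real.norm_of_nonneg vonMangoldt_nonneg, Complex.norm_exp]
  have : 0 ≤ vonMangoldt p.1 * vonMangoldt p.2 := mul_nonneg vonMangoldt_nonneg vonMangoldt_nonneg
  have hlog : 0 ≤ Real.log ((p.1 * p.2 : ℕ) : ℝ) := Real.log_natCast_nonneg _
  gcongr
  rw [Complex.re_mul_ofReal]
  simp only [Complex.neg_re, Complex.add_re, Complex.ofReal_re, Complex.mul_re, Complex.I_re,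
    mul_zero, Complex.ofReal_im, Complex.I_im, mul_one, sub_self, add_zero]
  nlinarith

open ArithmeticFunction in
lemma diag_inner (N : ℕ) (L : ℝ) (hL : Real.log N ≤ L) (k : ℕ) (hk : 0 < k) (hkL : Real.log k ≤ 2 * L) :
    ∑ q ∈ Finset.Ioc 0 N ×ˢ Finset.Ioc 0 N, (if q.1 * q.2 = k then vonMangoldt q.1 * vonMangoldt q.2 else 0)
      ≤ 2 * L^2 := by
  have hL0 : 0 ≤ L := (Real.log_natCast_nonneg N).trans hL
  rw [← Finset.sum_filter]
  set F := (Finset.Ioc 0 N ×ˢ Finset.Ioc 0 N).filter (fun q => q.1 * q.2 = k)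
  have hF : ∀ q ∈ F, 0 < q.1 ∧ 0 < q.2 ∧ q.2 ≤ N ∧ q.1 * q.2 = k := by
    intro q hq
    simp only [F, Finset.mem_filter, Finset.mem_product, Finset.mem_Ioc] at hq
    tauto
  calc ∑ q ∈ F, vonMangoldt q.1 * vonMangoldt q.2 ≤ ∑ q ∈ F, vonMangoldt q.1 * L := by
        refine Finset.sum_le_sum fun q hq => ?_
        obtain ⟨h1, h2, h3, h4⟩ := hF q hq
        apply mul_le_mul_of_nonneg_left _ vonMangoldt_nonneg
        refine vonMangoldt_le_log.trans (le_trans ?_ hL)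
        exact Real.log_le_log (by exact_mod_cast h2) (by exact_mod_cast h3)
    _ = ∑ d ∈ F.image Prod.fst, vonMangoldt d * L := by
        rw [Finset.sum_image]
        intro q hq q' hq' h
        obtain ⟨h1, h2, h3, h4⟩ := hF q hq
        obtain ⟨h1', h2', h3', h4'⟩ := hF q' hq'
        refine Prod.ext h ?_
        rw [← h4'] at h4
        rw [h] at h4
        exact Nat.eq_of_mul_eq_mul_left h1' h4
    _ ≤ ∑ d ∈ k.divisors, vonMangoldt d * L := by
        refine Finset.sum_le_sum_of_subset_of_nonneg ?_ fun _ _ _ => mul_nonneg vonMangoldt_nonneg hL0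
        intro d hd
        obtain ⟨q, hq, rfl⟩ := Finset.mem_image.mp hd
        obtain ⟨h1, h2, h3, h4⟩ := hF q hq
        exact Nat.mem_divisors.mpr ⟨⟨q.2, h4.symm⟩, hk.ne'⟩
    _ = Real.log k * L := by rw [← Finset.sum_mul, vonMangoldt_sum]
    _ ≤ _ := by nlinarith

lemma log_sep {a b M : ℕ} (ha : 0 < a) (hab : a < b) (hb : b ≤ M) :
    1 / (M:ℝ) ≤ |Real.log a - Real.log b| := by
  have ha' : (0:ℝ) < a := by exact_mod_cast ha
  have hb' : (0:ℝ) < b := by exact_mod_cast (ha.trans hab)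
  rw [abs_sub_comm, ← Real.log_div hb'.ne' ha'.ne']
  refine le_trans ?_ (le_abs_self _)
  refine le_trans ?_ (Real.one_sub_inv_le_log_of_pos (by positivity))
  rw [inv_div]
  have h1 : (a:ℝ) + 1 ≤ b := by exact_mod_cast hab
  have h2 : (a:ℝ) / b ≤ 1 - 1 / b := by
    rw [div_le_iff₀ hb']; field_simp; linarith
  have h3 : 1 / (M:ℝ) ≤ 1 / b := by
    apply one_div_le_one_div_of_le hb'; exact_mod_cast hb
  linarith

open ArithmeticFunction in
lemma Dir_mv (N J : ℕ) (L σ v : ℝ) (hN : 1 ≤ N) (hL : 1 ≤ L) (hNL : Real.log N ≤ L) (hσ : 1/2 ≤ σ)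
    (hJ : π * N^6 * L ≤ J) :
    ∑ j ∈ Finset.range J, ‖Dir N (σ + ((j / L + v : ℝ):ℂ) * Complex.I)‖^4 ≤ 9 * J * L^4 := by
  classical
  set I := Finset.Ioc 0 N
  have hI : ∀ n ∈ I, 0 < n ∧ n ≤ N := fun n hn => Finset.mem_Ioc.mp hn
  have hP : ∀ p ∈ I ×ˢ I, 0 < p.1 ∧ 0 < p.2 ∧ p.1 ≤ N ∧ p.2 ≤ N := by
    intro p hp
    rw [Finset.mem_product] at hp
    exact ⟨(hI _ hp.1).1, (hI _ hp.2).1, (hI _ hp.1).2, (hI _ hp.2).2⟩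
  have hlogI : ∀ n ∈ I, Real.log n ≤ L := by
    intro n hn
    refine le_trans ?_ hNL
    exact Real.log_le_log (by exact_mod_cast (hI n hn).1) (by exact_mod_cast (hI n hn).2)
  have hlogP : ∀ p ∈ I ×ˢ I, 0 ≤ Real.log ((p.1 * p.2 : ℕ):ℝ) ∧ Real.log ((p.1 * p.2 : ℕ):ℝ) ≤ 2 * L := by
    intro p hp
    refine ⟨Real.log_natCast_nonneg _, ?_⟩
    rw [log_mul_nat (hP p hp).1 (hP p hp).2.1]
    rw [Finset.mem_product] at hp
    linarith [hlogI _ hp.1, hlogI _ hp.2]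
  set x := xco (σ + v * Complex.I)
  set θ : ℕ × ℕ → ℝ := fun p => -(Real.log ((p.1 * p.2 : ℕ):ℝ) / L)
  have hL0 : 0 < L := by linarith
  have hN0 : (0:ℝ) < N := by exact_mod_cast hN
  have hθeq : ∀ p ∈ I ×ˢ I, ∀ q ∈ I ×ˢ I, θ p = θ q → q.1 * q.2 = p.1 * p.2 := by
    intro p hp q hq h
    simp only [θ, neg_inj] at h
    rw [div_left_inj' hL0.ne'] at h
    have h3 := Real.log_injOn_pos (x₁ := ((p.1 * p.2 : ℕ):ℝ)) (x₂ := ((q.1 * q.2 : ℕ):ℝ))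
      (by have := hP p hp; rw [Set.mem_Ioi]; exact_mod_cast Nat.mul_pos this.1 this.2.1)
      (by have := hP q hq; rw [Set.mem_Ioi]; exact_mod_cast Nat.mul_pos this.1 this.2.1) h
    exact_mod_cast h3.symm
  have hmv := mv_lemma (I ×ˢ I) x θ (1 / ((N:ℝ)^2 * L)) (by positivity) (by
      intro p hp q hq
      have a := hlogP p hp
      have b := hlogP q hq
      simp only [θ]
      rw [neg_sub_neg, ← sub_div, abs_div, abs_of_pos hL0, div_le_iff₀ hL0, abs_le]
      constructor <;> linarith) (by
      intro p hp q hq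
      have hp' := hP p hp
      have hq' := hP q hq
      have hpN : p.1 * p.2 ≤ N^2 := by nlinarith
      have hqN : q.1 * q.2 ≤ N^2 := by nlinarith
      have key : ∀ a b : ℕ, 0 < a → a < b → b ≤ N^2 →
          1 / ((N:ℝ)^2 * L) ≤ |Real.log a - Real.log b| / L := by
        intro a b ha hab hb
        have := log_sep ha hab hb
        rw [← div_div]
        push_cast at this
        gcongr
      rcases lt_trichotomy (p.1 * p.2) (q.1 * q.2) with h | h | h
      · right
        simp only [θ]
        rw [neg_sub_neg, ← sub_div, abs_div, abs_of_pos hL0, abs_sub_comm]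
        exact key _ _ (Nat.mul_pos hp'.1 hp'.2.1) h hqN
      · left; simp only [θ, h]
      · right
        simp only [θ]
        rw [neg_sub_neg, ← sub_div, abs_div, abs_of_pos hL0]
        exact key _ _ (Nat.mul_pos hq'.1 hq'.2.1) h hpN) J
  have hLHS : ∑ j ∈ Finset.range J, ‖Dir N (σ + ((j / L + v : ℝ):ℂ) * Complex.I)‖^4 =
      ∑ j ∈ Finset.range J, ‖∑ p ∈ I ×ˢ I, x p * Complex.exp (Complex.I * ((j * θ p : ℝ):ℂ))‖^2 := by
    refine Finset.sum_congr rfl fun j _ => ?_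
    rw [show (4:ℕ) = 2 * 2 by norm_num, pow_mul, ← norm_pow, Dir_sq]
  rw [hLHS]
  refine hmv.trans ?_
  have hΛ : ∀ n : ℕ, 0 ≤ vonMangoldt n := fun n => vonMangoldt_nonneg
  have hdiag : (∑ p ∈ I ×ˢ I, ∑ q ∈ I ×ˢ I, if θ p = θ q then ‖x p‖ * ‖x q‖ else 0) ≤ 8 * L^4 := by
    calc _ ≤ ∑ p ∈ I ×ˢ I, (vonMangoldt p.1 / p.1) * (vonMangoldt p.2 / p.2) *
          ∑ q ∈ I ×ˢ I, (if q.1 * q.2 = p.1 * p.2 then vonMangoldt q.1 * vonMangoldt q.2 else 0) := by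
          refine Finset.sum_le_sum fun p hp => ?_
          rw [Finset.mul_sum]
          refine Finset.sum_le_sum fun q hq => ?_
          have hp' := hP p hp
          have hq' := hP q hq
          by_cases h : θ p = θ q
          · have h' := hθeq p hp q hq h
            rw [if_pos h, if_pos h']
            have n1 := xco_norm (v := v) hσ hp'.1 hp'.2.1
            have n2 := xco_norm (v := v) hσ hq'.1 hq'.2.1
            rw [h'] at n2
            have hpp : (0:ℝ) < ((p.1 * p.2 : ℕ):ℝ) := by exact_mod_cast Nat.mul_pos hp'.1 hp'.2.1
            have hexp : Real.exp (-(Real.log ((p.1 * p.2 : ℕ) : ℝ)) / 2) *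
              Real.exp (-(Real.log ((p.1 * p.2 : ℕ) : ℝ)) / 2) = 1 / (p.1 * p.2) := by
              rw [← Real.exp_add, add_halves, Real.exp_neg, Real.exp_log hpp]; push_cast
              rw [one_div]
            calc ‖x p‖ * ‖x q‖ ≤ _ := mul_le_mul n1 n2 (norm_nonneg _) ((norm_nonneg _).trans n1)
              _ = vonMangoldt p.1 * vonMangoldt p.2 * (vonMangoldt q.1 * vonMangoldt q.2) *
                 (Real.exp (-(Real.log ((p.1 * p.2 : ℕ) : ℝ)) / 2) *
              Real.exp (-(Real.log ((p.1 * p.2 : ℕ) : ℝ)) / 2)) := by ring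
              _ = _ := by rw [hexp]; field_simp
          · rw [if_neg h]
            have := hΛ p.1; have := hΛ p.2; have := hΛ q.1; have := hΛ q.2
            split_ifs
            · positivity
            · simp
      _ ≤ ∑ p ∈ I ×ˢ I, (vonMangoldt p.1 / p.1) * (vonMangoldt p.2 / p.2) * (2 * L^2) := by
          refine Finset.sum_le_sum fun p hp => ?_
          have hp' := hP p hp
          have := hΛ p.1; have := hΛ p.2
          gcongr
          exact diag_inner N L hNL _ (Nat.mul_pos hp'.1 hp'.2.1) (hlogP p hp).2
      _ = (∑ n ∈ I, vonMangoldt n / n)^2 * (2 * L^2) := by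
          rw [← Finset.sum_mul, sq (∑ n ∈ I, _), Finset.sum_mul_sum, ← Finset.sum_product']
      _ ≤ (2 * L)^2 * (2 * L^2) := by
          have h1 := mertens_up N hN
          have h0 : 0 ≤ ∑ n ∈ I, vonMangoldt n / (n:ℝ) :=
            Finset.sum_nonneg fun n _ => div_nonneg (hΛ n) (Nat.cast_nonneg _)
          gcongr
          linarith
      _ = _ := by ring
  have hoff : ∑ p ∈ I ×ˢ I, ‖x p‖ ≤ N^2 * L^2 := by
    calc _ ≤ ∑ p ∈ I ×ˢ I, L * L := by
          refine Finset.sum_le_sum fun p hp => ?_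
          have hp' := hP p hp
          refine (xco_norm (v := v) hσ hp'.1 hp'.2.1).trans ?_
          have h1 : Real.exp (-(Real.log ((p.1 * p.2 : ℕ) : ℝ)) / 2) ≤ 1 := by
            apply Real.exp_le_one_iff.mpr; linarith [(hlogP p hp).1]
          have := hΛ p.1; have := hΛ p.2
          rw [Finset.mem_product] at hp
          have a1 : vonMangoldt p.1 ≤ L := vonMangoldt_le_log.trans (hlogI _ hp.1)
          have a2 : vonMangoldt p.2 ≤ L := vonMangoldt_le_log.trans (hlogI _ hp.2)
          calc _ ≤ vonMangoldt p.1 * vonMangoldt p.2 * 1 := by gcongr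
            _ ≤ _ := by rw [mul_one]; gcongr
      _ = _ := by
          simp [I]; ring
  have hoff2 : π / (1 / ((N:ℝ)^2 * L)) * (∑ p ∈ I ×ˢ I, ‖x p‖)^2 ≤ J * L^4 := by
    calc _ ≤ π / (1 / ((N:ℝ)^2 * L)) * (N^2 * L^2)^2 := by gcongr
      _ = π * N^6 * L * L^4 := by field_simp
      _ ≤ _ := by gcongr
  have : (J:ℝ) * (∑ p ∈ I ×ˢ I, ∑ q ∈ I ×ˢ I, if θ p = θ q then ‖x p‖ * ‖x q‖ else 0) ≤ J * (8 * L^4) := by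
    gcongr
  linarith



lemma Psi_eq_line4 (u : ℝ) :
    Psi (((4:ℝ):ℂ) + u * Complex.I) = 1 / (((3:ℝ):ℂ) + u * Complex.I)
      - LSeries (fun n => (ArithmeticFunction.vonMangoldt n : ℂ)) (((4:ℝ):ℂ) + u * Complex.I) := by
  set s : ℂ := ((4:ℝ):ℂ) + u * Complex.I with hs
  have hre : s.re = 4 := by simp [hs]
  have hs1 : s ≠ 1 := by
    intro h
    have := congrArg Complex.re h
    rw [hre] at this
    norm_num at this
  have hz : riemannZeta s ≠ 0 := riemannZeta_ne_zero_of_one_le_re (by rw [hre]; norm_num)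
  have hev : zeta1 =ᶠ[nhds s] fun s => (s - 1) * riemannZeta s := by
    filter_upwards [isOpen_ne.mem_nhds hs1] with w hw
    exact zeta1_of_ne hw
  have h3 : s - 1 = ((3:ℝ):ℂ) + u * Complex.I := by rw [hs]; push_cast; ring
  have hs0 : s - 1 ≠ 0 := sub_ne_zero.mpr hs1
  rw [Psi, logDeriv_apply, hev.deriv_eq, hev.eq_of_nhds,
    ArithmeticFunction.LSeries_vonMangoldt_eq_deriv_riemannZeta_div (by rw [hre]; norm_num), ← h3]
  have hd : deriv (fun s => (s - 1) * riemannZeta s) s = riemannZeta s + (s-1) * deriv riemannZeta s := by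
    have h1 : HasDerivAt (fun s : ℂ => s - 1) 1 s := (hasDerivAt_id s).sub_const 1
    have h2 := (differentiableAt_riemannZeta hs1).hasDerivAt
    have := (h1.mul h2).deriv
    rw [one_mul] at this
    exact this
  rw [hd]
  field_simp
  ring

lemma E_line4 (N : ℕ) (hN : 1 ≤ N) (u : ℝ) :
    ‖Psi (((4:ℝ):ℂ) + u * Complex.I) + Dir N (((4:ℝ):ℂ) + u * Complex.I)‖ ≤
      ‖1 / (((3:ℝ):ℂ) + u * Complex.I)‖ + 2 / N := by
  set s : ℂ := ((4:ℝ):ℂ) + u * Complex.I with hs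
  have hre : s.re = 4 := by simp [hs]
  set F : ℕ → ℂ := LSeries.term (fun n => (ArithmeticFunction.vonMangoldt n : ℂ)) s with hF
  have hsum : Summable F := ArithmeticFunction.LSeriesSummable_vonMangoldt (by rw [hre]; norm_num)
  have hsplit := hsum.sum_add_tsum_nat_add (N+1)
  have hF0 : F 0 = 0 := by simp [hF]
  have hterm : ∀ n : ℕ, 0 < n → F n = (ArithmeticFunction.vonMangoldt n : ℂ) *
      Complex.exp (-s * (Real.log n : ℂ)) := by
    intro n hn
    rw [hF, LSeries.term_of_ne_zero hn.ne', Complex.cpow_def_of_ne_zero (by exact_mod_cast hn.ne'),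
      div_eq_mul_inv, ← Complex.exp_neg, Complex.natCast_log]
    congr 2
    ring
  have hDir : Dir N s = ∑ n ∈ Finset.range (N+1), F n := by
    rw [Finset.sum_range_succ', hF0, add_zero, Dir]
    rw [Finset.sum_congr rfl (fun n hn => (hterm n (Finset.mem_Ioc.mp hn).1).symm)]
    have : Finset.Ioc 0 N = (Finset.range N).map ⟨fun n => n+1, fun a b h => by simpa using h⟩ := by
      ext a
      simp only [Finset.mem_Ioc, Finset.mem_map, Finset.mem_range]
      constructor
      · intro h; exact ⟨a-1, by omega, by change a - 1 + 1 = a; omega⟩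
      · rintro ⟨b, hb, rfl⟩; change 0 < b + 1 ∧ b + 1 ≤ N; omega
    rw [this, Finset.sum_map]
    rfl
  have hE : Psi s + Dir N s = 1 / (((3:ℝ):ℂ) + u * Complex.I) - ∑' n, F (n + (N+1)) := by
    rw [Psi_eq_line4, hDir, LSeries, ← hs]
    change _ - tsum F + _ = _
    rw [← hsplit]
    ring
  have hz2 : HasSum (fun n : ℕ => 1 / (((n:ℝ) + 1)^2)) (π^2/6) := by
    have := (hasSum_nat_add_iff' 1).mpr hasSum_zeta_two
    simpa using this
  have hN0 : (0:ℝ) < N := by exact_mod_cast hN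
  have hb : ∀ n : ℕ, ‖F (n + (N+1))‖ ≤ (1/(N:ℝ)) * (1 / (((n:ℝ) + 1)^2)) := by
    intro n
    rw [hterm _ (by omega), norm_mul, Complex.norm_real,
      Real.norm_of_nonneg ArithmeticFunction.vonMangoldt_nonneg, Complex.norm_exp]
    set m : ℕ := n + (N+1) with hm
    have hm0 : (0:ℝ) < m := by rw [hm]; positivity
    have h1 : ArithmeticFunction.vonMangoldt m ≤ m :=
      ArithmeticFunction.vonMangoldt_le_log.trans (Real.log_le_self hm0.le)
    have h2 : (-s * (Real.log m : ℂ)).re = -(4 * Real.log m) := by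
      rw [Complex.re_mul_ofReal, Complex.neg_re, hre]; ring
    rw [h2, Real.exp_neg, show Real.exp (4 * Real.log m) = (m:ℝ)^4 by
      rw [mul_comm, show Real.log m * 4 = ((4:ℕ):ℝ) * Real.log m by push_cast; ring,
        Real.exp_nat_mul, Real.exp_log hm0]]
    calc ArithmeticFunction.vonMangoldt m * ((m:ℝ)^4)⁻¹ ≤ m * ((m:ℝ)^4)⁻¹ := by gcongr
      _ = 1 / ((m:ℝ) * (m:ℝ)^2) := by field_simp
      _ ≤ 1 / ((N:ℝ) * ((n:ℝ)+1)^2) := by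
        apply one_div_le_one_div_of_le (by positivity)
        have e1 : (N:ℝ) ≤ m := by rw [hm]; push_cast; linarith [Nat.cast_nonneg (α := ℝ) n]
        have e2 : (n:ℝ)+1 ≤ m := by rw [hm]; push_cast; linarith
        gcongr
      _ = _ := by field_simp
  have ht : ‖∑' n, F (n + (N+1))‖ ≤ (1/(N:ℝ)) * (π^2/6) :=
    tsum_of_norm_bounded (hz2.mul_left _) hb
  have hpi : π^2/6 ≤ 2 := by
    have := Real.pi_lt_d2
    nlinarith [Real.pi_pos]
  rw [hE]
  calc _ ≤ ‖1 / (((3:ℝ):ℂ) + u * Complex.I)‖ + ‖∑' n, F (n + (N+1))‖ := norm_sub_le _ _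
    _ ≤ ‖1 / (((3:ℝ):ℂ) + u * Complex.I)‖ + (1/(N:ℝ)) * 2 := by
      gcongr
      exact ht.trans (by gcongr)
    _ = _ := by ring

lemma inv3_le_one (u : ℝ) : ‖1 / (((3:ℝ):ℂ) + u * Complex.I)‖ ≤ 1 := by
  rw [norm_div, norm_one]
  apply div_le_one_of_le₀ _ (norm_nonneg _)
  have := Complex.abs_re_le_norm (((3:ℝ):ℂ) + u * Complex.I)
  simp at this
  simp
  linarith

lemma inv3_le (u N : ℝ) (hN : 0 < N) (hu : N ≤ |u|) :
    ‖1 / (((3:ℝ):ℂ) + u * Complex.I)‖ ≤ 1 / N := by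
  rw [norm_div, norm_one]
  apply one_div_le_one_div_of_le hN
  have := Complex.abs_im_le_norm (((3:ℝ):ℂ) + u * Complex.I)
  simp at this
  simp
  linarith

lemma near_card (J : ℕ) (L v N : ℝ) (hL : 0 < L) (hN : 0 ≤ N) :
    (((Finset.range J).filter (fun j : ℕ => |(j:ℝ) / L + v| < N)).card : ℝ) ≤ 2 * N * L + 1 := by
  have hsub : ((Finset.range J).filter (fun j : ℕ => |(j:ℝ) / L + v| < N)).map Nat.castEmbedding ⊆
      Finset.Icc ⌈(-N - v)*L⌉ ⌊(N - v)*L⌋ := by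
    intro z hz
    simp only [Finset.mem_map, Finset.mem_filter, Nat.castEmbedding_apply] at hz
    obtain ⟨j, ⟨_, hj⟩, rfl⟩ := hz
    rw [abs_lt] at hj
    rw [Finset.mem_Icc, Int.ceil_le, Int.le_floor]
    have e : ((j:ℤ):ℝ) = (j:ℝ)/L * L := by push_cast; field_simp
    rw [e]
    constructor <;> apply mul_le_mul_of_nonneg_right _ hL.le <;> linarith
  have h1 := Finset.card_le_card hsub
  rw [Finset.card_map, Int.card_Icc] at h1
  have h2 : (((⌊(N - v)*L⌋ + 1 - ⌈(-N - v)*L⌉).toNat : ℤ) : ℝ) ≤ 2 * N * L + 1 := by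
    rw [Int.toNat_eq_max]
    push_cast
    apply max_le
    · have := Int.floor_le ((N - v)*L)
      have := Int.le_ceil ((-N - v)*L)
      linarith
    · positivity
  calc _ ≤ (((⌊(N - v)*L⌋ + 1 - ⌈(-N - v)*L⌉).toNat : ℕ) : ℝ) := by exact_mod_cast h1
    _ ≤ _ := by exact_mod_cast h2

lemma SE_four (N J : ℕ) (L v : ℝ) (hN : 1 ≤ N) (hL : 1 ≤ L) (hJ : (2 * N * L + 1) * (N:ℝ)^4 ≤ J) :
    ∑ j ∈ Finset.range J, ‖Psi (((4:ℝ):ℂ) + ((j / L + v : ℝ):ℂ) * Complex.I)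
      + Dir N (((4:ℝ):ℂ) + ((j / L + v : ℝ):ℂ) * Complex.I)‖^4 ≤ 162 * J / (N:ℝ)^4 := by
  have hN0 : (1:ℝ) ≤ N := by exact_mod_cast hN
  have hp : ∀ j ∈ Finset.range J, ‖Psi (((4:ℝ):ℂ) + ((j / L + v : ℝ):ℂ) * Complex.I)
      + Dir N (((4:ℝ):ℂ) + ((j / L + v : ℝ):ℂ) * Complex.I)‖^4 ≤
      81 / (N:ℝ)^4 + if |(j:ℝ) / L + v| < N then 81 else 0 := by
    intro j _
    refine (pow_le_pow_left₀ (norm_nonneg _) (E_line4 N hN _) 4).trans ?_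
    split_ifs with h
    · have h1 := inv3_le_one (j / L + v)
      have h2 : 2 / (N:ℝ) ≤ 2 := by
        rw [div_le_iff₀ (by linarith)]; linarith
      calc _ ≤ (3:ℝ)^4 := by gcongr; linarith
        _ ≤ _ := by
          have : 0 ≤ 81 / (N:ℝ)^4 := by positivity
          linarith
    · have h1 := inv3_le (j / L + v) N (by linarith) (not_lt.mp h)
      calc _ ≤ (3/(N:ℝ))^4 := by
            gcongr
            calc _ ≤ 1/(N:ℝ) + 2/N := by gcongr
              _ = _ := by ring
        _ = _ := by ring
  refine (Finset.sum_le_sum hp).trans ?_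
  rw [Finset.sum_add_distrib, Finset.sum_const, Finset.card_range, nsmul_eq_mul, ← Finset.sum_filter,
    Finset.sum_const, nsmul_eq_mul]
  have h1 := near_card J L v N (by linarith) (by linarith)
  have h2 : (2 * N * L + 1) ≤ J / (N:ℝ)^4 := by
    rw [le_div_iff₀ (by positivity)]; exact hJ
  calc _ ≤ (J:ℝ) * (81 / (N:ℝ)^4) + (J / (N:ℝ)^4) * 81 := by gcongr; exact h1.trans h2
    _ = _ := by ring



/-- vector valued function for the three lines argument -/
def fvec (E : ℂ → ℂ) (J : ℕ) (τ : ℕ → ℝ) (L : ℝ) (s : ℂ) : EuclideanSpace ℂ (Fin J) :=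
  WithLp.toLp 2 (fun j => Complex.exp (s^2 + L/2 * s) * (E (s + (τ j : ℂ) * Complex.I))^2)

lemma fvec_norm_sq (E : ℂ → ℂ) (J : ℕ) (τ : ℕ → ℝ) (L σ v : ℝ) :
    ‖fvec E J τ L (σ + v * Complex.I)‖^2 = Real.exp (2 * σ^2 + L * σ) * (Real.exp (-2*v^2) *
      ∑ j ∈ Finset.range J, ‖E (σ + ((τ j + v : ℝ):ℂ) * Complex.I)‖^4) := by
  rw [EuclideanSpace.norm_sq_eq, Finset.sum_range, ← mul_assoc, ← Real.exp_add, Finset.mul_sum]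
  refine Finset.sum_congr rfl fun j _ => ?_
  change ‖Complex.exp _ * (E _)^2‖^2 = _
  rw [norm_mul, mul_pow, norm_pow, ← pow_mul, Complex.norm_exp, ← Real.exp_nat_mul]
  congr 2
  · simp [sq]
    ring
  · congr 2
    push_cast
    ring

lemma gauss_le_one (v : ℝ) : Real.exp (-2*v^2) ≤ 1 := by
  rw [Real.exp_le_one_iff]; nlinarith [sq_nonneg v]

lemma gauss_pow_four (v : ℝ) : Real.exp (-2*v^2) * v^4 ≤ 1 := by
  have : Real.exp (-2*v^2) = (Real.exp (v^2))⁻¹ ^ 2 := by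
    rw [← Real.exp_neg, ← Real.exp_nat_mul]; congr 1; push_cast; ring
  rw [this, inv_pow, inv_mul_le_iff₀ (by positivity), mul_one]
  have := Real.add_one_le_exp (v^2)
  calc v^4 = (v^2)^2 := by ring
    _ ≤ _ := by gcongr; linarith

lemma add_pow_four_le {a b : ℝ} (ha : 0 ≤ a) (hb : 0 ≤ b) : (a+b)^4 ≤ 8 * a^4 + 8 * b^4 := by
  have := add_pow_le ha hb 4
  norm_num at this
  linarith

lemma growth_sum (E : ℂ → ℂ) (J : ℕ) (τ : ℕ → ℝ) (σ K v : ℝ)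
    (hg : ∀ t : ℝ, ‖E (σ + t * Complex.I)‖ ≤ K * (|t| + 1)) :
    Real.exp (-2*v^2) * ∑ j ∈ Finset.range J, ‖E (σ + ((τ j + v : ℝ):ℂ) * Complex.I)‖^4
        ≤ ∑ j ∈ Finset.range J, K^4 * (8 * (|τ j| + 1)^4 + 8) := by
  rw [Finset.mul_sum]
  refine Finset.sum_le_sum fun j _ => ?_
  have e1 := hg (τ j + v)
  have e2 : ‖E (σ + ((τ j + v : ℝ):ℂ) * Complex.I)‖^4 ≤ K^4 * (8 * (|τ j| + 1)^4 + 8 * v^4) := by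
    calc _ ≤ (K * (|τ j + v| + 1))^4 := by gcongr
      _ = K^4 * (|τ j + v| + 1)^4 := by ring
      _ ≤ K^4 * ((|τ j| + 1) + |v|)^4 := by
        refine mul_le_mul_of_nonneg_left (pow_le_pow_left₀ (by positivity) ?_ 4) (by positivity)
        linarith [abs_add_le (τ j) v]
      _ ≤ K^4 * (8 * (|τ j| + 1)^4 + 8 * |v|^4) := by
        gcongr
        exact add_pow_four_le (by positivity) (by positivity)
      _ = _ := by rw [← abs_pow, abs_of_nonneg (by positivity : 0 ≤ v^4)]
  have e3 := gauss_le_one v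
  have e4 := gauss_pow_four v
  calc _ ≤ Real.exp (-2*v^2) * (K^4 * (8 * (|τ j| + 1)^4 + 8 * v^4)) := by gcongr
    _ = K^4 * (8 * (Real.exp (-2*v^2) * (|τ j| + 1)^4) + 8 * (Real.exp (-2*v^2) * v^4)) := by ring
    _ ≤ K^4 * (8 * (1 * (|τ j| + 1)^4) + 8 * 1) := by gcongr
    _ = _ := by ring

lemma three_lines (E : ℂ → ℂ) (J : ℕ) (τ : ℕ → ℝ) (L σ0 K X R : ℝ) (h0 : 1/2 < σ0) (h4 : σ0 < 4)
    (hL : 0 < L) (hE : ∀ s : ℂ, 1/2 < s.re → DifferentiableAt ℂ E s)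
    (hg : ∀ σ t : ℝ, σ0 ≤ σ → σ ≤ 4 → ‖E (σ + t * Complex.I)‖ ≤ K * (|t| + 1))
    (hX : ∀ v : ℝ, Real.exp (-2*v^2) *
      ∑ j ∈ Finset.range J, ‖E (σ0 + ((τ j + v : ℝ):ℂ) * Complex.I)‖^4 ≤ X)
    (hR : ∀ v : ℝ, ∑ j ∈ Finset.range J, ‖E ((4:ℝ) + ((τ j + v : ℝ):ℂ) * Complex.I)‖^4 ≤ R)
    (σ v : ℝ) (h1 : σ0 ≤ σ) (h2 : σ ≤ 4) :
    Real.exp (-2*v^2) * ∑ j ∈ Finset.range J, ‖E (σ + ((τ j + v : ℝ):ℂ) * Complex.I)‖^4 ≤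
      Real.exp (-(L * (σ - σ0))) * X + Real.exp (32 + 4 * L) * R := by
  have hX0 : 0 ≤ X := le_trans (by positivity) (hX 0)
  have hR0 : 0 ≤ R := le_trans (by positivity) (hR 0)
  set M2 : ℝ := Real.exp (2 * σ0^2 + L * σ0) * X + Real.exp (32 + 4 * L) * R with hM2
  have hM20 : 0 ≤ M2 := by positivity
  have hre : ∀ z : ℂ, ∀ t : ℝ, (z + (t:ℂ) * Complex.I).re = z.re := by intro z t; simp
  -- differentiability
  have hdiff : ∀ s : ℂ, 1/2 < s.re → DifferentiableAt ℂ (fvec E J τ L) s := by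
    intro s hs
    rw [differentiableAt_euclidean]
    intro j
    change DifferentiableAt ℂ (fun s => Complex.exp (s^2 + L/2 * s) * (E (s + (τ j : ℂ) * Complex.I))^2) s
    have h := hE (s + (τ j : ℂ) * Complex.I) (by rw [hre]; exact hs)
    have h' : DifferentiableAt ℂ (fun s => E (s + (τ j : ℂ) * Complex.I)) s :=
      DifferentiableAt.comp (g := E) s h (by fun_prop)
    fun_prop
  have hdc : DiffContOnCl ℂ (fvec E J τ L) (Complex.re ⁻¹' Set.Ioo σ0 4) := by
    constructor
    · intro s hs
      exact (hdiff s (by have := hs.1; linarith)).differentiableWithinAt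
    · intro s hs
      have : s ∈ Complex.re ⁻¹' Set.Icc σ0 4 := by
        refine closure_minimal (Set.preimage_mono Set.Ioo_subset_Icc_self)
          (isClosed_Icc.preimage Complex.continuous_re) hs
      exact (hdiff s (by have := this.1; linarith)).continuousAt.continuousWithinAt
  -- bound
  have hbd : ∃ Q : ℝ, ∀ z : ℂ, σ0 < z.re → z.re < 4 → ‖fvec E J τ L z‖^2 ≤ Q := by
    refine ⟨Real.exp (2 * 4^2 + L * 4) * ∑ j ∈ Finset.range J, K^4 * (8 * (|τ j| + 1)^4 + 8), ?_⟩
    intro z hz1 hz2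
    rw [← Complex.re_add_im z, fvec_norm_sq]
    have := growth_sum E J τ z.re K z.im (fun t => hg z.re t hz1.le hz2.le)
    have hz0 : 0 ≤ z.re := by linarith
    gcongr
  obtain ⟨Q, hQ⟩ := hbd
  have hstrip : ‖fvec E J τ L (σ + v * Complex.I)‖ ≤ Real.sqrt M2 := by
    have hre2 : ((σ:ℂ) + v * Complex.I).re = σ := by simp
    refine PhragmenLindelof.vertical_strip (a := σ0) (b := 4) hdc ?_ ?_ ?_ (by rw [hre2]; exact h1)
      (by rw [hre2]; exact h2)
    · refine ⟨0, div_pos Real.pi_pos (by linarith), 0, ?_⟩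
      refine Asymptotics.IsBigO.of_bound (Real.sqrt Q) ?_
      rw [Filter.eventually_inf_principal]
      refine Filter.Eventually.of_forall fun z hz => ?_
      simp only [zero_mul, Real.exp_zero, norm_one, mul_one]
      exact Real.le_sqrt_of_sq_le (hQ z hz.1 hz.2)
    · intro z hz
      apply Real.le_sqrt_of_sq_le
      rw [← Complex.re_add_im z, hz, fvec_norm_sq]
      have := hX z.im
      calc _ ≤ Real.exp (2 * σ0^2 + L * σ0) * X := by gcongr
        _ ≤ M2 := by rw [hM2]; linarith [mul_nonneg (Real.exp_pos (32 + 4 * L)).le hR0]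
    · intro z hz
      apply Real.le_sqrt_of_sq_le
      rw [← Complex.re_add_im z, hz, fvec_norm_sq]
      have := hR z.im
      have e3 : Real.exp (-2*z.im^2) ≤ 1 := by
        rw [Real.exp_le_one_iff]; nlinarith [sq_nonneg z.im]
      calc _ ≤ Real.exp (2 * 4^2 + L * 4) * (1 * R) := by gcongr
        _ = Real.exp (32 + 4 * L) * R := by rw [one_mul]; congr 2; ring
        _ ≤ M2 := by rw [hM2]; linarith [mul_nonneg (Real.exp_pos (2 * σ0^2 + L * σ0)).le hX0]
  have h5 := pow_le_pow_left₀ (norm_nonneg _) hstrip 2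
  rw [Real.sq_sqrt hM20, fvec_norm_sq] at h5
  have h6 := mul_le_mul_of_nonneg_left h5 (Real.exp_pos (-(2 * σ^2 + L * σ))).le
  rw [← mul_assoc, ← Real.exp_add, neg_add_cancel, Real.exp_zero, one_mul, hM2, mul_add, ← mul_assoc,
    ← Real.exp_add, ← mul_assoc, ← Real.exp_add] at h6
  refine h6.trans ?_
  have g1 : -(2 * σ^2 + L * σ) + (2 * σ0^2 + L * σ0) ≤ -(L * (σ - σ0)) := by nlinarith
  have g2 : -(2 * σ^2 + L * σ) + (32 + 4 * L) ≤ 32 + 4 * L := by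
    have : 0 ≤ L * σ := mul_nonneg hL.le (by linarith)
    nlinarith [sq_nonneg σ]
  have g3 := Real.exp_le_exp.mpr g1
  have g4 := Real.exp_le_exp.mpr g2
  exact add_le_add (mul_le_mul_of_nonneg_right g3 hX0) (mul_le_mul_of_nonneg_right g4 hR0)



lemma Dir_differentiable (N : ℕ) : Differentiable ℂ (Dir N) := by
  unfold Dir
  fun_prop

lemma Dir_bound (N : ℕ) (σ t : ℝ) (hσ : 0 ≤ σ) :
    ‖Dir N (σ + t * Complex.I)‖ ≤ ∑ n ∈ Finset.Ioc 0 N, ArithmeticFunction.vonMangoldt n := by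
  unfold Dir
  refine (norm_sum_le _ _).trans (Finset.sum_le_sum fun n hn => ?_)
  rw [norm_mul, Complex.norm_real, Real.norm_of_nonneg ArithmeticFunction.vonMangoldt_nonneg,
    Complex.norm_exp]
  refine mul_le_of_le_one_right ArithmeticFunction.vonMangoldt_nonneg ?_
  rw [Real.exp_le_one_iff, Complex.re_mul_ofReal]
  have : 0 ≤ Real.log n := Real.log_natCast_nonneg n
  simp
  positivity

lemma ell_le (t : ℝ) : ell t ≤ 2 * (|t| + 1) := by
  unfold ell
  have := Real.log_le_sub_one_of_pos (show 0 < |t| + 3 by positivity)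
  linarith [abs_nonneg t]

lemma ell_add (t v : ℝ) (ht : 0 ≤ t) : ell (t + v) ≤ Real.log (t + 3) + |v| := by
  unfold ell
  have h1 : |t+v| + 3 ≤ (t+3) * (1 + |v|) := by
    have := abs_add_le t v
    rw [abs_of_nonneg ht] at this
    nlinarith [abs_nonneg v]
  calc _ ≤ Real.log ((t+3) * (1 + |v|)) := Real.log_le_log (by positivity) h1
    _ = Real.log (t+3) + Real.log (1 + |v|) := Real.log_mul (by positivity) (by positivity)
    _ ≤ _ := by
      have := Real.log_le_sub_one_of_pos (show 0 < 1 + |v| by positivity)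
      linarith

lemma ell_sum (J : ℕ) (L v : ℝ) (hL : 1 ≤ L) (hJ2 : Real.log (J / L + 3) ≤ 21 * L) :
    Real.exp (-2*v^2) * ∑ j ∈ Finset.range J, (ell (j / L + v))^4 ≤ 8 * (21^4+1) * J * L^4 := by
  rw [Finset.mul_sum]
  have : ∀ j ∈ Finset.range J, Real.exp (-2*v^2) * (ell (j / L + v))^4 ≤ 8 * (21^4+1) * L^4 := by
    intro j hj
    have hj' : (j:ℝ) ≤ J := by exact_mod_cast (Finset.mem_range.mp hj).le
    have h0 : 0 ≤ (j:ℝ)/L := by positivity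
    have h1 : ell (j / L + v) ≤ 21 * L + |v| := by
      refine (ell_add _ v h0).trans ?_
      have : Real.log ((j:ℝ)/L + 3) ≤ Real.log (J / L + 3) := by
        apply Real.log_le_log (by positivity)
        gcongr
      linarith
    have h2 : (ell (j / L + v))^4 ≤ 8 * (21*L)^4 + 8 * v^4 := by
      calc _ ≤ (21 * L + |v|)^4 := by
            have := one_le_ell (j / L + v)
            gcongr
        _ ≤ 8 * (21*L)^4 + 8 * |v|^4 := add_pow_four_le (by positivity) (by positivity)
        _ = _ := by rw [← abs_pow, abs_of_nonneg (by positivity : 0 ≤ v^4)]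
    have e3 := gauss_le_one v
    have e4 := gauss_pow_four v
    calc _ ≤ Real.exp (-2*v^2) * (8 * (21*L)^4 + 8 * v^4) := by gcongr
      _ = 8 * (Real.exp (-2*v^2) * (21*L)^4) + 8 * (Real.exp (-2*v^2) * v^4) := by ring
      _ ≤ 8 * (1 * (21*L)^4) + 8 * 1 := by gcongr
      _ ≤ _ := by
        have : 1 ≤ L^4 := one_le_pow₀ hL
        nlinarith
  refine (Finset.sum_le_sum this).trans ?_
  rw [Finset.sum_const, Finset.card_range, nsmul_eq_mul]
  apply le_of_eq; ring

lemma sum_add_four (J : ℕ) (f g : ℕ → ℂ) :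
    ∑ j ∈ Finset.range J, ‖f j + g j‖^4 ≤
      8 * ∑ j ∈ Finset.range J, ‖f j‖^4 + 8 * ∑ j ∈ Finset.range J, ‖g j‖^4 := by
  rw [Finset.mul_sum, Finset.mul_sum, ← Finset.sum_add_distrib]
  refine Finset.sum_le_sum fun j _ => ?_
  exact (pow_le_pow_left₀ (norm_nonneg _) (norm_add_le _ _) 4).trans
    (add_pow_four_le (norm_nonneg _) (norm_nonneg _))

/-- first constant -/
def C1 (A : ℝ) : ℝ := 64 * (60000*A)^4 * (8 * (21^4+1)) + 72
/-- second constant -/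
def C2 (A : ℝ) : ℝ := 8 * C1 A + 8 * (Real.exp 32 * 2592) + 72

lemma psi_fourth (hRH : RiemannHypothesis) (A L : ℝ) (N J : ℕ) (hL : 1 ≤ L) (hA1 : 1 ≤ A) (hAL : A ≤ L)
    (hA : 512 * A^4 * Real.exp (-(A-1)) ≤ 1/2) (hN : 1 ≤ N) (hN1 : Real.log N ≤ L)
    (hN2 : Real.exp L ≤ 2 * N) (hJ1 : π * N^6 * L ≤ J) (hJ2 : Real.log (J / L + 3) ≤ 21 * L) :
    ∑ j ∈ Finset.range J, ‖Psi ((1/2 + A * (1/L) : ℝ) + ((j / L : ℝ):ℂ) * Complex.I)‖^4 ≤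
      2 * C2 A * J * L^4 := by
  have hL0 : 0 < L := by linarith
  have hNR : (1:ℝ) ≤ N := by exact_mod_cast hN
  set a : ℝ := 1/L with ha
  have ha0 : 0 < a := by positivity
  have haA : A * a ≤ 1 := by rw [ha, mul_one_div, div_le_one hL0]; exact hAL
  have hLa : L * a = 1 := by rw [ha]; field_simp
  set σA : ℝ := 1/2 + A * a with hσA
  set σ0 : ℝ := 1/2 + a with hσ0
  have ha1 : a ≤ 1 := by nlinarith
  have h0A : σ0 ≤ σA := by rw [hσ0, hσA]; nlinarith
  set S : ℝ → ℝ → ℝ := fun σ v => ∑ j ∈ Finset.range J, ‖Psi (σ + ((j / L + v : ℝ):ℂ) * Complex.I)‖^4 with hS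
  set g : ℝ → ℝ := fun v => Real.exp (-2*v^2) with hg
  have hg0 : ∀ v, 0 ≤ g v := fun v => (Real.exp_pos _).le
  have hg1 : ∀ v, g v ≤ 1 := gauss_le_one
  set D : ℝ := ∑ n ∈ Finset.Ioc 0 N, ArithmeticFunction.vonMangoldt n with hD
  have hD0 : 0 ≤ D := Finset.sum_nonneg fun n _ => ArithmeticFunction.vonMangoldt_nonneg
  set K : ℝ := 60000 * (L+1) + D with hK
  -- growth
  have hgP : ∀ σ t : ℝ, σ0 ≤ σ → σ ≤ 4 → ‖Psi (σ + t * Complex.I)‖ ≤ 60000 * (L+1) * (|t|+1) := by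
    intro σ t h1 h2
    refine (Psi_B hRH σ t (by linarith) h2).trans ?_
    have e1 : 1/(σ - 1/2) ≤ L := by
      rw [div_le_iff₀ (by linarith), ← hLa]
      gcongr; linarith
    have e2 := ell_le t
    have e3 := one_le_ell t
    calc _ ≤ 30000 * (L + 1) * (2 * (|t|+1)) := by gcongr
      _ = _ := by ring
  have hgE : ∀ σ t : ℝ, σ0 ≤ σ → σ ≤ 4 → ‖Psi (σ + t * Complex.I) + Dir N (σ + t * Complex.I)‖ ≤ K * (|t|+1) := by
    intro σ t h1 h2
    have e1 := hgP σ t h1 h2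
    have e2 := Dir_bound N σ t (by linarith)
    refine (norm_add_le _ _).trans ?_
    rw [hK, add_mul]
    have : D * 1 ≤ D * (|t|+1) := by gcongr; linarith [abs_nonneg t]
    linarith
  -- sup
  have hbdd : BddAbove (Set.range fun v => g v * S σA v) := by
    refine ⟨∑ j ∈ Finset.range J, (60000 * (L+1))^4 * (8 * (|(j:ℝ)/L| + 1)^4 + 8), ?_⟩
    · rintro _ ⟨v, rfl⟩
      exact growth_sum Psi J (fun j => (j:ℝ)/L) σA (60000 * (L+1)) v
        (fun t => hgP σA t h0A (by linarith))
  set Y : ℝ := ⨆ v, g v * S σA v with hY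
  have hYle : ∀ v, g v * S σA v ≤ Y := fun v => le_ciSup hbdd v
  have hDm : ∀ σ v : ℝ, 1/2 ≤ σ → ∑ j ∈ Finset.range J, ‖Dir N (σ + ((j/L+v:ℝ):ℂ) * Complex.I)‖^4 ≤ 9*J*L^4 :=
    fun σ v hσ => Dir_mv N J L σ v hN hL hN1 hσ hJ1
  -- left line
  have hleft : ∀ v, g v * S σ0 v ≤ 8 * A^4 * Y + 8 * (60000*A)^4 * (8 * (21^4+1) * J * L^4) := by
    intro v
    have e1 : S σ0 v ≤ 8 * A^4 * S σA v + 8 * (60000*A)^4 * ∑ j ∈ Finset.range J, (ell (j / L + v))^4 := by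
      simp only [hS]
      rw [Finset.mul_sum, Finset.mul_sum, ← Finset.sum_add_distrib]
      refine Finset.sum_le_sum fun j _ => ?_
      have := Psi_H hRH a A (j/L+v) ha0 hA1 haA
      have e3 := one_le_ell (j / L + v)
      calc _ ≤ (A*‖Psi ((1/2+A*a:ℝ)+((j/L+v:ℝ):ℂ)*Complex.I)‖ + 60000*A*ell (j/L+v))^4 := by
            gcongr
        _ ≤ _ := add_pow_four_le (by positivity) (by positivity)
        _ = _ := by rw [hσA]; ring
    have e2 := ell_sum J L v hL hJ2
    calc _ ≤ g v * (8 * A^4 * S σA v + 8 * (60000*A)^4 * ∑ j ∈ Finset.range J, (ell (j / L + v))^4) :=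
          mul_le_mul_of_nonneg_left e1 (hg0 v)
      _ = 8 * A^4 * (g v * S σA v) + 8 * (60000*A)^4 * (g v * ∑ j ∈ Finset.range J, (ell (j / L + v))^4) := by ring
      _ ≤ _ := by
        have := hYle v
        gcongr
  set X : ℝ := 64 * A^4 * Y + C1 A * J * L^4 with hX
  have hXb : ∀ v : ℝ, Real.exp (-2*v^2) * ∑ j ∈ Finset.range J,
      ‖Psi (σ0 + ((j/L+v:ℝ):ℂ) * Complex.I) + Dir N (σ0 + ((j/L+v:ℝ):ℂ) * Complex.I)‖^4 ≤ X := by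
    intro v
    have e1 := sum_add_four J (fun j => Psi (σ0 + ((j/L+v:ℝ):ℂ) * Complex.I))
      (fun j => Dir N (σ0 + ((j/L+v:ℝ):ℂ) * Complex.I))
    have e2 := hDm σ0 v (by linarith)
    have e3 := hleft v
    have e4 := mul_le_mul_of_nonneg_left e1 (hg0 v)
    have e5 := mul_le_mul_of_nonneg_left e2 (hg0 v)
    have e6 : g v * (9*J*L^4) ≤ 1 * (9*J*L^4) := mul_le_mul_of_nonneg_right (hg1 v) (by positivity)
    simp only [hS] at e3
    rw [hX, C1]
    linarith
  have hRb : ∀ v : ℝ, ∑ j ∈ Finset.range J,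
      ‖Psi ((4:ℝ) + ((j/L+v:ℝ):ℂ) * Complex.I) + Dir N ((4:ℝ) + ((j/L+v:ℝ):ℂ) * Complex.I)‖^4 ≤ 162 * J / (N:ℝ)^4 := by
    intro v
    refine SE_four N J L v hN hL (le_trans ?_ hJ1)
    have hNL : 1 ≤ (N:ℝ) * L := by nlinarith
    calc (2 * N * L + 1) * (N:ℝ)^4 ≤ (3 * (N*L)) * (N:ℝ)^4 := by gcongr; linarith
      _ = 3 * (N:ℝ)^5 * L := by ring
      _ ≤ π * N^6 * L := by
        have := Real.pi_gt_three
        have : (N:ℝ)^5 ≤ (N:ℝ)^6 := pow_le_pow_right₀ hNR (by norm_num)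
        gcongr
  have hmain : ∀ v, g v * S σA v ≤ Y/2 + C2 A * J * L^4 := by
    intro v
    have t := three_lines (fun s => Psi s + Dir N s) J (fun j => (j:ℝ)/L) L σ0 K X (162 * J / (N:ℝ)^4)
      (by linarith) (by linarith) hL0
      (fun s hs => (Psi_diffOn hRH hs).add (Dir_differentiable N s)) hgE hXb hRb σA v h0A (by linarith)
    have hexp : L * (σA - σ0) = A - 1 := by
      rw [hσA, hσ0]
      calc _ = (A-1) * (L * a) := by ring
        _ = _ := by rw [hLa, mul_one]
    rw [hexp] at t
    have r1 : Real.exp (32 + 4*L) * (162 * J / (N:ℝ)^4) ≤ Real.exp 32 * 2592 * J := by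
      have : Real.exp (4*L) ≤ (2*N)^4 := by
        rw [show (4:ℝ)*L = ((4:ℕ):ℝ) * L by norm_num, Real.exp_nat_mul]
        gcongr
      rw [Real.exp_add]
      calc _ ≤ Real.exp 32 * (2*N)^4 * (162 * J / (N:ℝ)^4) := by gcongr
        _ = _ := by field_simp; ring
    have hL4 : 1 ≤ L^4 := one_le_pow₀ hL
    have r2 : Real.exp 32 * 2592 * J ≤ Real.exp 32 * 2592 * J * L^4 := le_mul_of_one_le_right (by positivity) hL4
    have hY0 : 0 ≤ Y := le_trans (by simp only [hS]; have := hg0 0; positivity) (hYle 0)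
    have r3 : Real.exp (-(A-1)) * X ≤ Y / 16 + C1 A * J * L^4 := by
      have q1 : Real.exp (-(A-1)) ≤ 1 := by rw [Real.exp_le_one_iff]; linarith
      have q2 : 0 ≤ C1 A * J * L^4 := by unfold C1; positivity
      have q3 := mul_le_mul_of_nonneg_right hA hY0
      have q4 := mul_le_mul_of_nonneg_right q1 q2
      rw [hX]
      linarith
    have e1 := sum_add_four J (fun j => Psi (σA + ((j/L+v:ℝ):ℂ) * Complex.I) + Dir N (σA + ((j/L+v:ℝ):ℂ) * Complex.I))
      (fun j => - Dir N (σA + ((j/L+v:ℝ):ℂ) * Complex.I))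
    simp only [add_neg_cancel_right, norm_neg] at e1
    have e2 := hDm σA v (by linarith)
    have e4 := mul_le_mul_of_nonneg_left e1 (hg0 v)
    have e5 := mul_le_mul_of_nonneg_left e2 (hg0 v)
    have e6 : g v * (9*J*L^4) ≤ 1 * (9*J*L^4) := mul_le_mul_of_nonneg_right (hg1 v) (by positivity)
    simp only [hS]
    rw [C2]
    simp only [hg] at e4 e5 e6 ⊢
    linarith
  have hYf : Y ≤ Y/2 + C2 A * J * L^4 := ciSup_le hmain
  have h := hYle 0
  simp only [hS, hg, add_zero] at h
  norm_num at h
  norm_num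
  linarith



lemma zetaOrds_finite (T : ℝ) : (zetaOrds T).Finite := by
  have hc : IsCompact ((fun γ : ℝ => (1/2 + γ * Complex.I : ℂ)) '' Set.Icc 0 T) :=
    isCompact_Icc.image (by fun_prop)
  have hf := hc.inter_riemannZetaZeros_finite
  refine Set.Finite.of_finite_image (f := fun γ : ℝ => (1/2 + γ * Complex.I : ℂ)) (hf.subset ?_) ?_
  · rintro _ ⟨γ, hγ, rfl⟩
    refine ⟨⟨γ, ⟨hγ.1.le, hγ.2.1⟩, rfl⟩, ?_⟩
    exact hγ.2.2
  · intro a _ b _ h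
    simpa using h

/-- finset of ordinates -/
def Zf (T : ℝ) : Finset ℝ := (zetaOrds_finite T).toFinset

lemma mem_Zf {T γ : ℝ} : γ ∈ Zf T ↔ γ ∈ zetaOrds T := by simp [Zf]

lemma zetaN_eq (T : ℝ) : zetaN T = ∑ γ ∈ Zf T, ordMult γ :=
  finsum_mem_eq_finite_toFinset_sum _ _

lemma Dcount_eq (lam T : ℝ) : Dcount lam T = ∑ γ ∈ Zf T,
    ((ordMult γ - 1) + if nextOrd γ - γ ≤ 2 * π * lam / Real.log T then 1 else 0) :=
  finsum_mem_eq_finite_toFinset_sum _ _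

lemma Ddcount_eq (lam T : ℝ) : Ddcount lam T =
    ((Zf T).filter (fun γ => nextOrd γ - γ ≤ 2 * π * lam / Real.log T)).card := by
  rw [Ddcount, Nat.card_coe_set_eq, ← Set.ncard_coe_finset]
  congr 1
  ext γ
  simp [mem_Zf]

lemma pairCount_eq (T δ : ℝ) : pairCount T δ =
    ∑ p ∈ (Zf T ×ˢ Zf T).filter (fun p => 0 < |p.1 - p.2| ∧ |p.1 - p.2| ≤ δ), ordMult p.1 * ordMult p.2 := by
  rw [pairCount, ← finsum_mem_coe_finset]
  have : {p : ℝ × ℝ | p.1 ∈ zetaOrds T ∧ p.2 ∈ zetaOrds T ∧ 0 < |p.1 - p.2| ∧ |p.1 - p.2| ≤ δ} =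
      (((Zf T ×ˢ Zf T).filter (fun p => 0 < |p.1 - p.2| ∧ |p.1 - p.2| ≤ δ) : Finset (ℝ × ℝ)) : Set (ℝ × ℝ)) := by
    ext p
    simp only [Finset.coe_filter, Finset.mem_product, mem_Zf, Set.mem_ofPred_eq, and_assoc]
  rw [this]

lemma Ddcount_le_Dcount (lam T : ℝ) : Ddcount lam T ≤ Dcount lam T := by
  rw [Ddcount_eq, Dcount_eq, Finset.card_filter]
  exact Finset.sum_le_sum fun γ _ => Nat.le_add_left _ _

lemma Ddcount_le_zetaN (lam T : ℝ) : Ddcount lam T ≤ zetaN T := by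
  rw [Ddcount_eq, zetaN_eq, Finset.card_filter]
  refine Finset.sum_le_sum fun γ hγ => ?_
  have := ordMult_pos (mem_Zf.mp hγ).2.2
  split_ifs <;> omega

lemma nextOrd_le {γ γ' : ℝ} (h : γ < γ') (hz : riemannZeta (1 / 2 + γ' * Complex.I) = 0) :
    nextOrd γ ≤ γ' :=
  csInf_le ⟨γ, fun _ hx => hx.1.le⟩ ⟨h, hz⟩

/-- window count -/
def Ww (T b L : ℝ) (j : ℕ) : ℕ := ∑ γ ∈ (Zf T).filter (fun γ => |γ - j / L| ≤ b), ordMult γ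

/-- third constant -/
def C3 (A : ℝ) : ℝ := 16 * A^4 * (16 * C2 A + 8 * 630000^4)

lemma W_fourth (hRH : RiemannHypothesis) (A L T : ℝ) (N J : ℕ) (hL : 1 ≤ L) (hA1 : 1 ≤ A) (hAL : A ≤ L)
    (hA : 512 * A^4 * Real.exp (-(A-1)) ≤ 1/2) (hN : 1 ≤ N) (hN1 : Real.log N ≤ L)
    (hN2 : Real.exp L ≤ 2 * N) (hJ1 : π * N^6 * L ≤ J) (hJ2 : Real.log (J / L + 3) ≤ 21 * L) :
    ∑ j ∈ Finset.range J, (Ww T (A * (1/L)) L j : ℝ)^4 ≤ C3 A * J := by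
  have hL0 : 0 < L := by linarith
  have hP := psi_fourth hRH A L N J hL hA1 hAL hA hN hN1 hN2 hJ1 hJ2
  set b : ℝ := A * (1/L) with hb
  have hb0 : 0 < b := by positivity
  have hb1 : b ≤ 1 := by rw [hb, mul_one_div, div_le_one hL0]; exact hAL
  have hbL : b * L = A := by rw [hb]; field_simp
  have key : ∀ j ∈ Finset.range J, (Ww T b L j : ℝ)^4 ≤
      128 * b^4 * ‖Psi ((1/2 + b : ℝ) + ((j / L : ℝ):ℂ) * Complex.I)‖^4 + 128 * b^4 * (630000 * L)^4 := by
    intro j hj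
    have hj' : (j:ℝ) ≤ J := by exact_mod_cast (Finset.mem_range.mp hj).le
    have h1 := Psi_W hRH b (j/L) hb0 hb1 ((Zf T).filter (fun γ => |γ - j / L| ≤ b)) (by
      intro γ hγ
      rw [Finset.mem_filter] at hγ
      exact ⟨(mem_Zf.mp hγ.1).2.2, hγ.2⟩)
    have h2 : ell (j/L) ≤ 21 * L := by
      have e := ell_add (j/L) 0 (by positivity)
      have : Real.log ((j:ℝ)/L + 3) ≤ Real.log (J / L + 3) := by
        apply Real.log_le_log (by positivity)
        gcongr
      simp at e
      linarith
    have h3 : (Ww T b L j : ℝ) ≤ 2*b*(‖Psi ((1/2+b:ℝ)+((j/L:ℝ):ℂ)*Complex.I)‖ + 630000 * L) := by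
      rw [Ww]
      push_cast
      push_cast at h1
      refine h1.trans ?_
      refine mul_le_mul_of_nonneg_left ?_ (by positivity)
      linarith
    calc _ ≤ (2*b*(‖Psi ((1/2+b:ℝ)+((j/L:ℝ):ℂ)*Complex.I)‖ + 630000 * L))^4 := by gcongr
      _ = 16 * b^4 * (‖Psi ((1/2+b:ℝ)+((j/L:ℝ):ℂ)*Complex.I)‖ + 630000 * L)^4 := by ring
      _ ≤ 16 * b^4 * (8 * ‖Psi ((1/2+b:ℝ)+((j/L:ℝ):ℂ)*Complex.I)‖^4 + 8 * (630000 * L)^4) := by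
        gcongr
        exact add_pow_four_le (norm_nonneg _) (by positivity)
      _ = _ := by ring
  refine (Finset.sum_le_sum key).trans ?_
  rw [Finset.sum_add_distrib, ← Finset.mul_sum, Finset.sum_const, Finset.card_range, nsmul_eq_mul]
  calc _ ≤ 128 * b^4 * (2 * C2 A * J * L^4) + J * (128 * b^4 * (630000 * L)^4) := by gcongr
    _ = 16 * (b*L)^4 * (16 * C2 A + 8 * 630000^4) * J := by ring
    _ = _ := by rw [hbL, C3]

lemma floor_bin {L γ : ℝ} (hL : 0 < L) (hγ : 0 ≤ γ) :
    ((⌊γ * L⌋₊ : ℕ) : ℝ) / L ≤ γ ∧ γ ≤ ((⌊γ * L⌋₊ : ℕ) : ℝ) / L + 1 / L := by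
  have h1 := Nat.floor_le (show 0 ≤ γ * L by positivity)
  have h2 := (Nat.lt_floor_add_one (γ * L)).le
  constructor
  · rw [div_le_iff₀ hL]; exact h1
  · rw [← add_div, le_div_iff₀ hL]; exact h2

lemma zetaN_le (T b L : ℝ) (J : ℕ) (hL : 0 < L) (hb : 1/L ≤ b) (hJ : T * L < J) :
    (zetaN T : ℝ) ≤ ∑ j ∈ Finset.range J, (Ww T b L j : ℝ)^4 := by
  have h1 : zetaN T ≤ ∑ j ∈ Finset.range J, Ww T b L j := by
    rw [zetaN_eq]
    rw [← Finset.sum_fiberwise_of_maps_to (t := Finset.range J) (g := fun γ : ℝ => ⌊γ * L⌋₊)]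
    · refine Finset.sum_le_sum fun j _ => ?_
      rw [Ww]
      refine Finset.sum_le_sum_of_subset ?_
      intro γ hγ
      rw [Finset.mem_filter] at hγ ⊢
      refine ⟨hγ.1, ?_⟩
      have := floor_bin hL (mem_Zf.mp hγ.1).1.le
      rw [hγ.2] at this
      rw [abs_le]
      have hL1 : 0 < 1/L := by positivity
      constructor <;> linarith
    · intro γ hγ
      have h := mem_Zf.mp hγ
      rw [Finset.mem_range, Nat.floor_lt (mul_nonneg h.1.le hL.le)]
      calc _ ≤ T * L := by gcongr; exact h.2.1
        _ < _ := hJ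
  have h2 : ∑ j ∈ Finset.range J, Ww T b L j ≤ ∑ j ∈ Finset.range J, (Ww T b L j)^4 :=
    Finset.sum_le_sum fun j _ => Nat.le_self_pow (by norm_num) _
  exact_mod_cast h1.trans h2

lemma pair_sq (lam T b L : ℝ) (J : ℕ) (hL : 0 < L) (hb : 1/L + 2 * π * lam / Real.log T ≤ b) (hJ : T * L < J) :
    (pairCount T (2 * π * lam / Real.log T) : ℝ)^2 ≤
      Ddcount lam T * ∑ j ∈ Finset.range J, (Ww T b L j : ℝ)^4 := by
  set δ : ℝ := 2 * π * lam / Real.log T with hδ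
  set E := (Zf T).filter (fun γ => nextOrd γ - γ ≤ δ) with hE
  set JE := E.image (fun γ : ℝ => ⌊γ * L⌋₊) with hJE
  have hJEsub : JE ⊆ Finset.range J := by
    intro j hj
    rw [hJE, Finset.mem_image] at hj
    obtain ⟨γ, hγ, rfl⟩ := hj
    rw [hE, Finset.mem_filter] at hγ
    have h := mem_Zf.mp hγ.1
    rw [Finset.mem_range, Nat.floor_lt (mul_nonneg h.1.le hL.le)]
    calc _ ≤ T * L := by gcongr; exact h.2.1
      _ < _ := hJ
  have h1 : pairCount T δ ≤ ∑ j ∈ JE, (Ww T b L j)^2 := by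
    rw [pairCount_eq]
    rw [← Finset.sum_fiberwise_of_maps_to (t := JE) (g := fun p : ℝ × ℝ => ⌊(min p.1 p.2) * L⌋₊)]
    · refine Finset.sum_le_sum fun j _ => ?_
      rw [Ww, sq, Finset.sum_mul_sum, ← Finset.sum_product']
      refine Finset.sum_le_sum_of_subset ?_
      intro p hp
      rw [Finset.mem_filter, Finset.mem_filter, Finset.mem_product] at hp
      obtain ⟨⟨⟨hp1, hp2⟩, hp3, hp4⟩, hp5⟩ := hp
      have hp1' := (mem_Zf.mp hp1).1
      have hp2' := (mem_Zf.mp hp2).1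
      have := floor_bin hL (le_min hp1'.le hp2'.le)
      rw [hp5] at this
      have hL1 : 0 < 1/L := by positivity
      rw [abs_le] at hp4
      rw [Finset.mem_product, Finset.mem_filter, Finset.mem_filter, abs_le, abs_le]
      have m1 := min_le_left p.1 p.2
      have m2 := min_le_right p.1 p.2
      have m3 : p.1 ≤ min p.1 p.2 + δ := by
        rcases min_choice p.1 p.2 with h | h <;> rw [h] <;> linarith
      have m4 : p.2 ≤ min p.1 p.2 + δ := by
        rcases min_choice p.1 p.2 with h | h <;> rw [h] <;> linarith
      refine ⟨⟨hp1, ?_, ?_⟩, hp2, ?_, ?_⟩ <;> linarith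
    · intro p hp
      rw [Finset.mem_filter, Finset.mem_product] at hp
      obtain ⟨⟨hp1, hp2⟩, hp3, hp4⟩ := hp
      rw [hJE]
      refine Finset.mem_image_of_mem (fun γ : ℝ => ⌊γ * L⌋₊) ?_
      rw [hE, Finset.mem_filter]
      have hne : p.1 ≠ p.2 := by
        intro h; rw [h] at hp3; simp at hp3
      rw [abs_le] at hp4
      rcases lt_or_gt_of_ne hne with h | h
      · rw [min_eq_left h.le]
        refine ⟨hp1, ?_⟩
        have := nextOrd_le h (mem_Zf.mp hp2).2.2
        linarith
      · rw [min_eq_right h.le]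
        refine ⟨hp2, ?_⟩
        have := nextOrd_le h (mem_Zf.mp hp1).2.2
        linarith
  have h1' : (pairCount T δ : ℝ) ≤ ∑ j ∈ JE, (Ww T b L j : ℝ)^2 := by exact_mod_cast h1
  have hc : (JE.card : ℝ) ≤ Ddcount lam T := by
    rw [Ddcount_eq]
    exact_mod_cast Finset.card_image_le
  calc _ ≤ (∑ j ∈ JE, (Ww T b L j : ℝ)^2)^2 := by gcongr
    _ ≤ JE.card * ∑ j ∈ JE, ((Ww T b L j : ℝ)^2)^2 := sq_sum_le_card_mul_sum_sq
    _ = JE.card * ∑ j ∈ JE, (Ww T b L j : ℝ)^4 := by simp only [← pow_mul]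
    _ ≤ _ := by
      gcongr

lemma final_real (P d n H : ℝ) (hd : 0 ≤ d) (hdn : d ≤ n) (hnH : n ≤ H) (hPH : P^2 ≤ d * H) :
    P ≤ H * (d/n)^((1:ℝ)/4) := by
  have hn : 0 ≤ n := hd.trans hdn
  have hH : 0 ≤ H := hn.trans hnH
  set q := d/n with hq
  have hq0 : 0 ≤ q := by positivity
  have hq1 : q ≤ 1 := div_le_one_of_le₀ hdn hn
  have hdq : d = q * n := by
    rcases hn.eq_or_lt with h | h
    · rw [← h] at hdn ⊢; linarith
    · rw [hq]; field_simp
  have h4 : (q^((1:ℝ)/4))^4 = q := by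
    rw [← Real.rpow_natCast, ← Real.rpow_mul hq0]; norm_num
  set r := q^((1:ℝ)/4) with hr
  have hr0 : 0 ≤ r := Real.rpow_nonneg hq0 _
  have hr1 : r ≤ 1 := Real.rpow_le_one hq0 hq1 (by norm_num)
  refine (abs_le_of_sq_le_sq' ?_ (by positivity)).2
  calc P^2 ≤ q * n * H := by rw [← hdq]; exact hPH
    _ ≤ q * H * H := by gcongr
    _ = (r^2 * H^2) * r^2 := by rw [← h4]; ring
    _ ≤ (r^2 * H^2) * 1 := by gcongr; exact pow_le_one₀ hr0 hr1
    _ = _ := by ring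

lemma exists_A (lam : ℝ) : ∃ A : ℝ, 1 ≤ A ∧ 1 + lam ≤ A ∧ 512 * A^4 * Real.exp (-(A-1)) ≤ 1/2 := by
  have h := (Real.tendsto_pow_mul_exp_neg_atTop_nhds_zero 4).const_mul (512 * Real.exp 1)
  rw [mul_zero] at h
  have h2 := h.eventually (gt_mem_nhds (show (0:ℝ) < 1/2 by norm_num))
  obtain ⟨A, hA, h3, h4⟩ := (h2.and ((eventually_ge_atTop (1:ℝ)).and (eventually_ge_atTop (1+lam)))).exists
  refine ⟨A, h3, h4, ?_⟩
  refine le_trans (le_of_eq ?_) hA.le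
  rw [show -(A-1) = 1 + -A by ring, Real.exp_add]
  ring

/-- Assume RH and fix `λ > 0`. Then for all sufficiently large `T`,
`#{(γ,γ') : 0<γ,γ'≤T, 0<|γ-γ'|≤2πλ/log T} ≪ (T log T) D_d(λ,T)^{1/4} ≤ (T log T) D(λ,T)^{1/4}`,
with an implied constant depending at most on `λ`. -/
theorem pair_count_bound (hRH : RiemannHypothesis) (lam : ℝ) (hlam : 0 < lam) :
    ∃ C : ℝ, 0 < C ∧ ∀ᶠ T : ℝ in atTop,
      (pairCount T (2 * π * lam / Real.log T) : ℝ) ≤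
          C * (T * Real.log T) * Ddprop lam T ^ ((1 : ℝ) / 4) ∧
        (T * Real.log T) * Ddprop lam T ^ ((1 : ℝ) / 4) ≤
          (T * Real.log T) * Dprop lam T ^ ((1 : ℝ) / 4) := by
  obtain ⟨A, hA1, hAl, hA⟩ := exists_A lam
  have hC3 : 0 < C3 A := by
    unfold C3 C2 C1
    positivity
  refine ⟨C3 A, hC3, ?_⟩
  have hlog : ∀ᶠ T : ℝ in atTop, 20 * A ≤ Real.log T :=
    Real.tendsto_log_atTop.eventually (eventually_ge_atTop (20 * A))
  filter_upwards [hlog, eventually_gt_atTop 0] with T hT hT0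
  set L : ℝ := Real.log T / 20 with hLdef
  have hlogT : Real.log T = 20 * L := by rw [hLdef]; ring
  have hAL : A ≤ L := by rw [hLdef]; linarith
  have hL : 1 ≤ L := hA1.trans hAL
  have hL0 : 0 < L := by linarith
  have hTexp : T = Real.exp (20 * L) := by rw [← hlogT, Real.exp_log hT0]
  have hTge : 21 ≤ T := by
    rw [hTexp]
    have := Real.add_one_le_exp (20 * L)
    linarith
  have hTL : 0 ≤ T * Real.log T := by rw [hlogT]; positivity
  have hexpL : 2 ≤ Real.exp L := by have := Real.add_one_le_exp L; linarith
  set N : ℕ := ⌊Real.exp L⌋₊ with hNdef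
  have hN : 1 ≤ N := by
    rw [hNdef, Nat.one_le_floor_iff]; linarith
  have hNR : (1:ℝ) ≤ N := by exact_mod_cast hN
  have hNle : (N:ℝ) ≤ Real.exp L := Nat.floor_le (Real.exp_pos _).le
  have hN1 : Real.log N ≤ L := by
    rw [Real.log_le_iff_le_exp (by linarith)]; exact hNle
  have hN2 : Real.exp L ≤ 2 * N := by
    have := (Nat.lt_floor_add_one (Real.exp L)).le
    rw [← hNdef] at this
    linarith
  set J : ℕ := ⌈T * L⌉₊ + 1 with hJdef
  have hJlow : T * L < J := by
    have := Nat.le_ceil (T * L)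
    rw [hJdef]; push_cast; linarith
  have hJup : (J:ℝ) ≤ T * L + 2 := by
    have := (Nat.ceil_lt_add_one (show 0 ≤ T * L by positivity)).le
    rw [hJdef]; push_cast; linarith
  have hJ1 : π * N^6 * L ≤ J := by
    refine le_trans ?_ hJlow.le
    gcongr
    have e1 : (N:ℝ)^6 ≤ Real.exp (6 * L) := by
      rw [show (6:ℝ) * L = ((6:ℕ):ℝ) * L by norm_num, Real.exp_nat_mul]
      gcongr
    have e2 : π ≤ Real.exp (14 * L) := by
      have := Real.add_one_le_exp (14 * L)
      linarith [Real.pi_lt_d2]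
    calc π * (N:ℝ)^6 ≤ Real.exp (14 * L) * Real.exp (6 * L) := by gcongr
      _ = T := by rw [← Real.exp_add, hTexp]; congr 1; ring
  have hJ2 : Real.log (J / L + 3) ≤ 21 * L := by
    rw [Real.log_le_iff_le_exp (by positivity)]
    have e1 : (J:ℝ)/L ≤ T + 2 := by
      rw [div_le_iff₀ hL0]; nlinarith
    have e2 : Real.exp (21 * L) = T * Real.exp L := by
      rw [hTexp, ← Real.exp_add]; congr 1; ring
    rw [e2]
    nlinarith
  have hW := W_fourth hRH A L T N J hL hA1 hAL hA hN hN1 hN2 hJ1 hJ2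
  have hδ : 1/L + 2 * π * lam / Real.log T ≤ A * (1/L) := by
    rw [hlogT]
    have : 2 * π * lam / (20 * L) ≤ lam * (1/L) := by
      rw [mul_one_div, div_le_div_iff₀ (by positivity) hL0]
      have := Real.pi_lt_d2
      have h1 : 0 < lam * L := by positivity
      nlinarith
    have h2 : (1 + lam) * (1/L) ≤ A * (1/L) := by gcongr
    linarith
  have hsq := pair_sq lam T (A * (1/L)) L J hL0 hδ hJlow
  have hb : 1/L ≤ A * (1/L) := le_mul_of_one_le_left (by positivity) hA1
  have hNH := zetaN_le T (A * (1/L)) L J hL0 hb hJlow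
  have hdn : (Ddcount lam T : ℝ) ≤ zetaN T := by exact_mod_cast Ddcount_le_zetaN lam T
  have hfin := final_real _ _ _ _ (Nat.cast_nonneg _) hdn hNH hsq
  have hDd0 : 0 ≤ Ddprop lam T := by unfold Ddprop; positivity
  constructor
  · refine hfin.trans ?_
    change _ * (Ddprop lam T)^((1:ℝ)/4) ≤ _
    have hr := Real.rpow_nonneg hDd0 ((1:ℝ)/4)
    refine mul_le_mul_of_nonneg_right (hW.trans ?_) hr
    refine mul_le_mul_of_nonneg_left ?_ hC3.le
    rw [hlogT]
    nlinarith
  · refine mul_le_mul_of_nonneg_left (Real.rpow_le_rpow hDd0 ?_ (by norm_num)) hTL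
    unfold Ddprop Dprop
    gcongr
    exact Ddcount_le_Dcount lam T
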